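/- arXiv:2505.12270 — 2 statements merged into one kernel-verified Lean document; each statement's English description precedes it below -/
import Mathlib

section
/- For every nonnegative integer n and each i ∈ {2,3,4,5}, b^4_{3,4}(48n + 8i + 7) ≡ 0 (mod 8). Moreover b^4_{3,4}(1) ≡ 4 (mod 3) (indeed b^4_{3,4}(1) = 4) and b^4_{3,4}(2n+1) ≡ 0 (mod 3) for every integer n ≥ 1. -/
/-- `coloredRegular k l m n` is the number of `k`-colored partitions of `n` into parts
divisible by neither `l` nor `m`, i.e. the coefficient of `q^n` in
`∏_{j ≥ 1, l ∤ j, m ∤ j} (1 - q^j)^{-k}`.  A `k`-colored partition is a multiset of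
(part, color) pairs, where parts are positive integers not divisible by `l` or `m`
and colors range over `{0, …, k-1}`. -/
noncomputable def coloredRegular (k l m n : ℕ) : ℕ :=
  Nat.card {M : Multiset (ℕ × ℕ) //
    (∀ x ∈ M, ¬ l ∣ x.1 ∧ ¬ m ∣ x.1 ∧ x.2 < k) ∧ (M.map Prod.fst).sum = n}

section Helpers
open PowerSeries Finset

/-- C_n -/
lemma shanks_sq {R : Type*} [CommRing R] (x : R) (n : ℕ) :
    (1 + 2 * ∑ a ∈ range n, (-1) ^ (a + 1) * x ^ ((a + 1) ^ 2)) * ∏ k ∈ range n, (1 + x ^ (k + 1))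
    = ∏ k ∈ range n, (1 - x ^ (k + 1)) +
      ∑ s ∈ range n, 2 * (-1) ^ (s + 1) * x ^ ((s + 1) * (n + 1)) *
        ((∏ k ∈ Ico (s + 1) n, (1 - x ^ (k + 1))) * ∏ k ∈ range s, (1 + x ^ (k + 1))) := by
  induction n with
  | zero => simp
  | succ n ih =>
    -- partial telescoping
    have tel : ∀ r, r ≤ n →
        (∏ k ∈ range (n + 1), (1 - x ^ (k + 1)))
          - (1 + x ^ (n + 1)) * (∏ k ∈ range n, (1 - x ^ (k + 1))) +
        ∑ s ∈ range r, (2 * (-1) ^ (s + 1) * x ^ ((s + 1) * (n + 1 + 1)) *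
            ((∏ k ∈ Ico (s + 1) (n + 1), (1 - x ^ (k + 1))) * ∏ k ∈ range s, (1 + x ^ (k + 1)))
          - (1 + x ^ (n + 1)) * (2 * (-1) ^ (s + 1) * x ^ ((s + 1) * (n + 1)) *
            ((∏ k ∈ Ico (s + 1) n, (1 - x ^ (k + 1))) * ∏ k ∈ range s, (1 + x ^ (k + 1)))))
        = 2 * (-1) ^ (r + 1) * x ^ ((r + 1) * (n + 1)) *
            ((∏ k ∈ Ico r n, (1 - x ^ (k + 1))) * ∏ k ∈ range r, (1 + x ^ (k + 1))) := by
      intro r hr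
      induction r with
      | zero =>
        simp only [range_zero, sum_empty, prod_empty]
        rw [prod_range_succ, range_eq_Ico]
        ring
      | succ r ihr =>
        rw [sum_range_succ, ← add_assoc, ihr (by omega), prod_Ico_succ_top (by omega),
          Finset.prod_eq_prod_Ico_succ_bot (show r < n by omega), prod_range_succ]
        ring
    have h := tel n le_rfl
    rw [sum_sub_distrib, ← mul_sum] at h
    rw [sum_range_succ, prod_range_succ _ n, sum_range_succ _ n]
    simp only [Ico_self, prod_empty] at h ⊢
    linear_combination (1 + x ^ (n + 1)) * ih - h

lemma shanks_tri {R : Type*} [CommRing R] (x : R) (n : ℕ) :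
    (∑ a ∈ range n, (x ^ (a * (2 * a + 1)) + x ^ ((a + 1) * (2 * a + 1)))) *
      ∏ k ∈ range n, (1 - x ^ (2 * k + 1))
    = ∑ s ∈ range n, x ^ (s * (2 * n + 1)) *
        ((∏ k ∈ Ico s n, (1 - x ^ (2 * (k + 1)))) * ∏ k ∈ range s, (1 - x ^ (2 * k + 1))) := by
  induction n with
  | zero => simp
  | succ n ih =>
    have tel : ∀ r, r ≤ n →
        ∑ s ∈ range r, (x ^ (s * (2 * (n + 1) + 1)) *
            ((∏ k ∈ Ico s (n + 1), (1 - x ^ (2 * (k + 1)))) * ∏ k ∈ range s, (1 - x ^ (2 * k + 1)))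
          - (1 - x ^ (2 * n + 1)) * (x ^ (s * (2 * n + 1)) *
            ((∏ k ∈ Ico s n, (1 - x ^ (2 * (k + 1)))) * ∏ k ∈ range s, (1 - x ^ (2 * k + 1)))))
        = x ^ (r * (2 * n + 1)) * (1 - x ^ (2 * r)) *
            ((∏ k ∈ Ico r n, (1 - x ^ (2 * (k + 1)))) * ∏ k ∈ range r, (1 - x ^ (2 * k + 1))) := by
      intro r hr
      induction r with
      | zero => simp
      | succ r ihr =>
        rw [sum_range_succ, ihr (by omega), prod_Ico_succ_top (by omega),
          Finset.prod_eq_prod_Ico_succ_bot (show r < n by omega), prod_range_succ]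
        ring
    have h := tel n le_rfl
    rw [sum_sub_distrib, ← mul_sum] at h
    rw [sum_range_succ, prod_range_succ _ n, sum_range_succ _ n]
    simp only [Ico_self, prod_empty, Nat.Ico_succ_singleton, prod_singleton] at h ⊢
    linear_combination (1 - x ^ (2 * n + 1)) * ih - h

noncomputable section
variable (R : Type*) [CommRing R]

def EE : R⟦X⟧ := PowerSeries.mk fun n => coeff n (∏ k ∈ range n, (1 - (X : R⟦X⟧) ^ (k + 1)))

variable {R}
def pr (N : ℕ) : R⟦X⟧ →+* R⟦X⟧ ⧸ Ideal.span {(X : R⟦X⟧) ^ N} := Ideal.Quotient.mk _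

lemma pr_dvd {N : ℕ} {f g : R⟦X⟧} : pr N f = pr N g ↔ X ^ N ∣ f - g := by
  rw [pr, Ideal.Quotient.eq, Ideal.mem_span_singleton]

lemma pr_iff {N : ℕ} {f g : R⟦X⟧} : pr N f = pr N g ↔ ∀ m < N, coeff m f = coeff m g := by
  rw [pr_dvd, X_pow_dvd_iff]
  simp [sub_eq_zero]

lemma pr_mono {N M : ℕ} (h : M ≤ N) {f g : R⟦X⟧} (hf : pr N f = pr N g) : pr M f = pr M g := by
  rw [pr_iff] at *
  exact fun m hm => hf m (by omega)

lemma ext_pr {f g : R⟦X⟧} (h : ∀ N, ∃ M, N ≤ M ∧ pr M f = pr M g) : f = g := by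
  ext n
  obtain ⟨M, h1, h2⟩ := h (n + 1)
  exact pr_iff.1 h2 n (by omega)

lemma pr_expand {k : ℕ} (hk : k ≠ 0) {N : ℕ} {f g : R⟦X⟧} (h : pr N f = pr N g) :
    pr (k * N) (expand k hk f) = pr (k * N) (expand k hk g) := by
  rw [pr_dvd] at *
  obtain ⟨c, hc⟩ := h
  refine ⟨expand k hk c, ?_⟩
  rw [← map_sub, hc, map_mul, map_pow, expand_X, pow_mul]

lemma coeff_prod_stable (n M : ℕ) (h : n ≤ M) :
    coeff n (∏ k ∈ range M, (1 - (X : R⟦X⟧) ^ (k + 1))) =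
    coeff n (∏ k ∈ range n, (1 - (X : R⟦X⟧) ^ (k + 1))) := by
  induction M, h using Nat.le_induction with
  | base => rfl
  | succ M h ih =>
    rw [prod_range_succ, mul_sub, mul_one, map_sub, ih, coeff_mul_X_pow']
    simp; omega

lemma pr_EE {N M : ℕ} (h : N ≤ M + 1) :
    pr N (EE R) = pr N (∏ k ∈ range M, (1 - (X : R⟦X⟧) ^ (k + 1))) := by
  rw [pr_iff]
  intro m hm
  rw [coeff_prod_stable m M (by omega), EE, coeff_mk]

lemma pr_EEk {k : ℕ} (hk : k ≠ 0) {N M : ℕ} (h : N ≤ k * (M + 1)) :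
    pr N (expand k hk (EE R)) = pr N (∏ i ∈ range M, (1 - (X : R⟦X⟧) ^ (k * (i + 1)))) := by
  refine (pr_mono h (pr_expand hk (pr_EE le_rfl))).trans ?_
  simp [map_prod, pow_mul]

def th (w : ℕ → R) (g : ℕ → ℕ) : R⟦X⟧ :=
  PowerSeries.mk fun n => ∑ x ∈ range (n + 1), if g x = n then w x else 0

lemma pr_th {w : ℕ → R} {g : ℕ → ℕ} (hg : ∀ x, x ≤ g x) {N M : ℕ} (h : N ≤ M) :
    pr N (th w g) = pr N (∑ x ∈ range M, C (w x) * X ^ (g x)) := by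
  rw [pr_iff]
  intro m hm
  simp only [th, coeff_mk, map_sum, coeff_C_mul, coeff_X_pow, mul_ite, mul_one, mul_zero]
  simp only [eq_comm (a := m)]
  apply sum_subset
  · intro a; simp; omega
  · intro a _ h2
    have := hg a
    simp at h2
    rw [if_neg (by omega)]

lemma pr_thk {k : ℕ} (hk : k ≠ 0) {w : ℕ → R} {g : ℕ → ℕ} (hg : ∀ x, x ≤ g x) {N M : ℕ}
    (h : N ≤ M) :
    pr N (expand k hk (th w g)) = pr N (∑ x ∈ range M, C (w x) * X ^ (k * g x)) := by
  have h1 : N ≤ k * N := Nat.le_mul_of_pos_left _ (by omega)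
  refine (pr_mono h1 (pr_expand hk (pr_th hg h))).trans ?_
  simp [map_sum, pow_mul, expand_C]

variable (R) in
def SS : R⟦X⟧ := th (fun x => (-1) ^ (x + 1)) (fun x => (x + 1) ^ 2)
variable (R) in
def psi : R⟦X⟧ := th (fun _ => 1) (fun x => x * (x + 1) / 2)

lemma tri_le (x : ℕ) : x ≤ x * (x + 1) / 2 := by
  rw [Nat.le_div_iff_mul_le (by norm_num)]
  rcases x with _ | x
  · simp
  · nlinarith
lemma sq_le' (x : ℕ) : x ≤ (x + 1) ^ 2 := by nlinarith

lemma phi_prod : (1 + 2 * SS R) * expand 2 (by norm_num) (EE R) = (EE R) ^ 2 := by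
  apply ext_pr
  intro N
  refine ⟨N, le_rfl, ?_⟩
  have h1 := shanks_sq (X : R⟦X⟧) N
  have h2 : pr N (SS R) = _ := pr_th (R := R) sq_le' (le_refl N)
  have h3 := pr_EE (R := R) (Nat.le_succ N)
  have h4 := pr_EEk (R := R) (k := 2) (by norm_num) (show N ≤ 2 * (N + 1) by omega)
  have h5 : ∏ i ∈ range N, (1 - (X : R⟦X⟧) ^ (2 * (i + 1))) =
     (∏ k ∈ range N, (1 + (X : R⟦X⟧) ^ (k + 1))) * ∏ k ∈ range N, (1 - (X : R⟦X⟧) ^ (k + 1)) := by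
    rw [← prod_mul_distrib]
    refine prod_congr rfl fun i _ => by ring
  have h6 : pr N ((1 + 2 * ∑ a ∈ range N, (-1) ^ (a + 1) * (X : R⟦X⟧) ^ ((a + 1) ^ 2)) *
      ∏ k ∈ range N, (1 + (X : R⟦X⟧) ^ (k + 1))) = pr N (∏ k ∈ range N, (1 - (X : R⟦X⟧) ^ (k + 1))) := by
    rw [h1, pr_dvd, add_sub_cancel_left]
    refine dvd_sum fun s hs => ?_
    refine Dvd.dvd.mul_right (Dvd.dvd.mul_left (pow_dvd_pow _ ?_) _) _
    nlinarith
  simp only [map_mul, map_add, map_pow, map_one] at h6 ⊢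
  rw [h2, h3, h4, h5, map_mul, ← mul_assoc]
  simp only [map_neg, map_pow, map_one]
  rw [h6, pow_two]

lemma tri_even (a : ℕ) : (2 * a) * (2 * a + 1) / 2 = a * (2 * a + 1) := by
  rw [mul_assoc, Nat.mul_div_cancel_left _ (by norm_num)]
lemma tri_odd (a : ℕ) : (2 * a + 1) * (2 * a + 1 + 1) / 2 = (a + 1) * (2 * a + 1) := by
  rw [show (2 * a + 1) * (2 * a + 1 + 1) = 2 * ((a + 1) * (2 * a + 1)) by ring,
    Nat.mul_div_cancel_left _ (by norm_num)]

lemma sum_range_two_mul {M : Type*} [AddCommMonoid M] (f : ℕ → M) (n : ℕ) :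
    ∑ a ∈ range (2 * n), f a = ∑ a ∈ range n, (f (2 * a) + f (2 * a + 1)) := by
  induction n with
  | zero => simp
  | succ n ih => rw [mul_add, mul_one, sum_range_succ, sum_range_succ, sum_range_succ, ih, add_assoc]

lemma prod_range_two_mul {M : Type*} [CommMonoid M] (f : ℕ → M) (n : ℕ) :
    ∏ a ∈ range (2 * n), f a = (∏ a ∈ range n, f (2 * a)) * ∏ a ∈ range n, f (2 * a + 1) := by
  rw [← prod_mul_distrib]
  induction n with
  | zero => simp
  | succ n ih =>
    rw [mul_add, mul_one, prod_range_succ, prod_range_succ, prod_range_succ, ih, mul_assoc]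

lemma psi_prod : psi R * EE R = (expand 2 (by norm_num) (EE R)) ^ 2 := by
  apply ext_pr
  intro N
  refine ⟨N, le_rfl, ?_⟩
  have h1 := shanks_tri (X : R⟦X⟧) N
  have h2 : pr N (psi R) = _ := pr_th (R := R) tri_le (show N ≤ 2 * N by omega)
  have h3 := pr_EE (R := R) (show N ≤ 2 * N + 1 by omega)
  have h4 := pr_EEk (R := R) (k := 2) (by norm_num) (show N ≤ 2 * (N + 1) by omega)
  have h6 : pr N ((∑ a ∈ range N, ((X : R⟦X⟧) ^ (a * (2 * a + 1)) + X ^ ((a + 1) * (2 * a + 1)))) *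
      ∏ k ∈ range N, (1 - X ^ (2 * k + 1))) = pr N (∏ k ∈ range N, (1 - (X : R⟦X⟧) ^ (2 * (k + 1)))) := by
    rw [h1, pr_dvd]
    rcases N with _ | N
    · simp
    rw [sum_range_succ']
    simp only [zero_mul, pow_zero, one_mul, range_zero, prod_empty, mul_one, ← range_eq_Ico,
      add_sub_cancel_right]
    refine dvd_sum fun s hs => ?_
    refine Dvd.dvd.mul_right (pow_dvd_pow _ ?_) _
    nlinarith
  rw [map_mul, map_pow, h2, h3, h4, prod_range_two_mul, sum_range_two_mul]
  simp only [tri_even, tri_odd, map_one, one_mul]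
  rw [map_mul, ← mul_assoc, ← map_mul, h6]
  simp only [pow_two, mul_add, mul_one, add_assoc, one_add_one_eq_two]

end

noncomputable section
variable {R : Type*} [CommRing R]

def msets (S : Finset (ℕ × ℕ)) (n : ℕ) : Set (Multiset (ℕ × ℕ)) :=
  {M | (∀ x ∈ M, x ∈ S) ∧ (M.map Prod.fst).sum = n}

lemma le_of_mem_msets {S : Finset (ℕ × ℕ)} {n : ℕ}
    {M : Multiset (ℕ × ℕ)} (h : M ∈ msets S n) {x : ℕ × ℕ} (hx : x ∈ M) : x.1 ≤ n := by
  rw [← h.2]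
  exact Multiset.single_le_sum (fun _ _ => Nat.zero_le _) _ (Multiset.mem_map_of_mem _ hx)

lemma msets_finite {S : Finset (ℕ × ℕ)} (hS : ∀ x ∈ S, 0 < x.1) (n : ℕ) : (msets S n).Finite := by
  apply Set.Finite.subset (Multiset.powerset (n • S.val)).toFinset.finite_toSet
  intro M hM
  simp only [Multiset.mem_toFinset, Finset.mem_coe, Multiset.mem_powerset]
  rw [Multiset.le_iff_count]
  intro a
  by_cases ha : a ∈ M
  · have h1 := hM.1 a ha
    rw [Multiset.count_nsmul, Multiset.count_eq_one_of_mem S.nodup h1, mul_one]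
    have h2 : M.card ≤ (M.map Prod.fst).sum := by
      have := Multiset.card_nsmul_le_sum (s := M.map Prod.fst) (a := 1) (by
        intro x hx
        obtain ⟨y, hy, rfl⟩ := Multiset.mem_map.1 hx
        exact hS y (hM.1 y hy))
      simpa using this
    rw [hM.2] at h2
    exact (Multiset.count_le_card _ _).trans h2
  · rw [Multiset.count_eq_zero_of_notMem ha]
    exact Nat.zero_le _

def cnt (S : Finset (ℕ × ℕ)) (n : ℕ) : ℕ := (msets S n).ncard

lemma cnt_insert {S : Finset (ℕ × ℕ)} {a : ℕ × ℕ} (ha : a ∉ S)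
    (hS : ∀ x ∈ insert a S, 0 < x.1) (n : ℕ) :
    cnt (insert a S) n = cnt S n + if a.1 ≤ n then cnt (insert a S) (n - a.1) else 0 := by
  have hS' : ∀ x ∈ S, 0 < x.1 := fun x hx => hS x (mem_insert_of_mem hx)
  by_cases h : a.1 ≤ n
  · rw [if_pos h]
    have h1 : msets (insert a S) n = msets S n ∪ (fun M => a ::ₘ M) '' (msets (insert a S) (n - a.1)) := by
      ext M
      constructor
      · rintro ⟨h1, h2⟩
        by_cases haM : a ∈ M
        · right
          obtain ⟨M', rfl⟩ := Multiset.exists_cons_of_mem haM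
          refine ⟨M', ⟨fun x hx => h1 x (Multiset.mem_cons_of_mem hx), ?_⟩, rfl⟩
          rw [Multiset.map_cons, Multiset.sum_cons] at h2
          omega
        · left
          refine ⟨fun x hx => ?_, h2⟩
          rcases mem_insert.1 (h1 x hx) with rfl | h3
          · exact absurd hx haM
          · exact h3
      · rintro (⟨h1, h2⟩ | ⟨M', ⟨h1, h2⟩, rfl⟩)
        · exact ⟨fun x hx => mem_insert_of_mem (h1 x hx), h2⟩
        · refine ⟨fun x hx => ?_, ?_⟩
          · rcases Multiset.mem_cons.1 hx with rfl | h3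
            · exact mem_insert_self _ _
            · exact h1 x h3
          · simp only [Multiset.map_cons, Multiset.sum_cons]
            omega
    unfold cnt
    rw [h1, Set.ncard_union_eq _ (msets_finite hS' n) ((msets_finite hS _).image _),
      Set.ncard_image_of_injective]
    · intro M N hMN
      simpa using hMN
    · rw [Set.disjoint_left]
      rintro _ ⟨h1, _⟩ ⟨M, _, rfl⟩
      exact ha (h1 a (Multiset.mem_cons_self _ _))
  · rw [if_neg h, add_zero]
    unfold cnt
    congr 1
    ext M
    constructor
    · intro hM
      refine ⟨fun x hx => ?_, hM.2⟩
      rcases mem_insert.1 (hM.1 x hx) with rfl | h3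
      · exact absurd (le_of_mem_msets hM hx) h
      · exact h3
    · rintro ⟨h1, h2⟩
      exact ⟨fun x hx => mem_insert_of_mem (h1 x hx), h2⟩

variable (R) in
def WW (S : Finset (ℕ × ℕ)) : R⟦X⟧ := PowerSeries.mk fun n => (cnt S n : R)

lemma WW_mul (S : Finset (ℕ × ℕ)) (hS : ∀ x ∈ S, 0 < x.1) :
    WW R S * ∏ x ∈ S, (1 - X ^ x.1) = 1 := by
  induction S using Finset.induction_on with
  | empty =>
    ext n
    simp only [WW, prod_empty, mul_one, coeff_mk, coeff_one]
    have : cnt ∅ n = if n = 0 then 1 else 0 := by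
      unfold cnt msets
      split_ifs with h
      · subst h
        rw [Set.ncard_eq_one]
        refine ⟨0, ?_⟩
        ext M
        simp only [Finset.notMem_empty, Set.mem_ofPred_eq, Set.mem_singleton_iff]
        constructor
        · rintro ⟨h1, _⟩
          exact Multiset.eq_zero_of_forall_notMem h1
        · rintro rfl
          simp
      · refine (Set.ncard_eq_zero (msets_finite (S := ∅) (by simp) n)).2 ?_
        · ext M
          simp only [Set.mem_empty_iff_false, iff_false]
          rintro ⟨h1, h2⟩
          have := Multiset.eq_zero_of_forall_notMem (fun x hx => absurd (h1 x hx) (Finset.notMem_empty x))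
          subst this
          simp at h2
          exact h h2.symm
    rw [this]
    split_ifs <;> simp
  | insert a S ha ih =>
    have ih := ih (fun x hx => hS x (mem_insert_of_mem hx))
    rw [prod_insert ha, ← mul_assoc]
    refine Eq.trans ?_ ih
    congr 1
    ext n
    rw [mul_sub, mul_one, map_sub, coeff_mul_X_pow']
    simp only [WW, coeff_mk]
    rw [cnt_insert ha hS n]
    split_ifs <;> simp

variable (R) in
def GG : R⟦X⟧ := PowerSeries.mk fun n => (coloredRegular 4 3 4 n : R)

def allowed (N : ℕ) : Finset (ℕ × ℕ) :=
  ((range N).image (· + 1)).filter (fun j => ¬ 3 ∣ j ∧ ¬ 4 ∣ j) ×ˢ range 4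

lemma mem_allowed {N : ℕ} {x : ℕ × ℕ} :
    x ∈ allowed N ↔ x.1 ≤ N ∧ ¬ 3 ∣ x.1 ∧ ¬ 4 ∣ x.1 ∧ x.2 < 4 := by
  simp only [allowed, mem_product, mem_filter, mem_image, Finset.mem_range]
  constructor
  · rintro ⟨⟨⟨a, h1, h2⟩, h3⟩, h4⟩
    exact ⟨by omega, h3.1, h3.2, h4⟩
  · rintro ⟨h1, h2, h3, h4⟩
    refine ⟨⟨⟨x.1 - 1, ?_, ?_⟩, h2, h3⟩, h4⟩
    · omega
    · omega

lemma cnt_allowed {N n : ℕ} (h : n ≤ N) : cnt (allowed N) n = coloredRegular 4 3 4 n := by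
  unfold cnt coloredRegular
  rw [← Nat.card_coe_set_eq]
  have : msets (allowed N) n = {M : Multiset (ℕ × ℕ) |
    (∀ x ∈ M, ¬ 3 ∣ x.1 ∧ ¬ 4 ∣ x.1 ∧ x.2 < 4) ∧ (M.map Prod.fst).sum = n} := by
    ext M
    constructor
    · rintro ⟨h1, h2⟩
      exact ⟨fun x hx => (mem_allowed.1 (h1 x hx)).2, h2⟩
    · rintro ⟨h1, h2⟩
      refine ⟨fun x hx => mem_allowed.2 ⟨?_, h1 x hx⟩, h2⟩
      refine le_trans ?_ h
      rw [← h2]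
      exact Multiset.single_le_sum (fun _ _ => Nat.zero_le _) _ (Multiset.mem_map_of_mem _ hx)
  rw [this]
  rfl

lemma pr_GG (N : ℕ) : pr (N + 1) (GG R) = pr (N + 1) (WW R (allowed N)) := by
  rw [pr_iff]
  intro m hm
  simp only [GG, WW, coeff_mk]
  rw [cnt_allowed (by omega)]

lemma prod_allowed (N : ℕ) : ∏ x ∈ allowed N, (1 - (X : R⟦X⟧) ^ x.1) =
    (∏ j ∈ range N, if ¬ 3 ∣ (j + 1) ∧ ¬ 4 ∣ (j + 1) then (1 - (X : R⟦X⟧) ^ (j + 1)) else 1) ^ 4 := by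
  unfold allowed
  rw [prod_product]
  simp only [prod_const, card_range]
  rw [prod_pow, prod_filter, prod_image (by intro a _ b _ h; simpa using h)]

lemma prod_twelve (L : ℕ) :
    (∏ j ∈ range (12 * L), if ¬ 3 ∣ (j + 1) ∧ ¬ 4 ∣ (j + 1) then (1 - (X : R⟦X⟧) ^ (j + 1)) else 1) *
    (∏ i ∈ range (4 * L), (1 - (X : R⟦X⟧) ^ (3 * (i + 1)))) *
    (∏ i ∈ range (3 * L), (1 - (X : R⟦X⟧) ^ (4 * (i + 1)))) =
    (∏ j ∈ range (12 * L), (1 - (X : R⟦X⟧) ^ (j + 1))) *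
    (∏ i ∈ range L, (1 - (X : R⟦X⟧) ^ (12 * (i + 1)))) := by
  induction L with
  | zero => simp
  | succ L ih =>
    simp only [mul_add, mul_one, prod_range_succ, add_assoc, Nat.reduceAdd]
      at ih ⊢
    have h3 : ∀ c, (3 ∣ 12 * L + c) ↔ 3 ∣ c := fun c => by omega
    have h4 : ∀ c, (4 ∣ 12 * L + c) ↔ 4 ∣ c := fun c => by omega
    simp only [h3, h4, Nat.reduceDvd] 
    norm_num [← mul_assoc]
    generalize (∏ j ∈ range (12 * L), if ¬ 3 ∣ (j + 1) ∧ ¬ 4 ∣ (j + 1) then (1 - (X : R⟦X⟧) ^ (j + 1)) else 1) = A at *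
    generalize 1 - (X : R⟦X⟧) ^ (12 * L + 1) = a1
    generalize 1 - (X : R⟦X⟧) ^ (12 * L + 2) = a2
    generalize 1 - (X : R⟦X⟧) ^ (12 * L + 3) = a3
    generalize 1 - (X : R⟦X⟧) ^ (12 * L + 4) = a4
    generalize 1 - (X : R⟦X⟧) ^ (12 * L + 5) = a5
    generalize 1 - (X : R⟦X⟧) ^ (12 * L + 6) = a6
    generalize 1 - (X : R⟦X⟧) ^ (12 * L + 7) = a7
    generalize 1 - (X : R⟦X⟧) ^ (12 * L + 8) = a8
    generalize 1 - (X : R⟦X⟧) ^ (12 * L + 9) = a9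
    generalize 1 - (X : R⟦X⟧) ^ (12 * L + 10) = a10
    generalize 1 - (X : R⟦X⟧) ^ (12 * L + 11) = a11
    generalize 1 - (X : R⟦X⟧) ^ (12 * L + 12) = a12
    linear_combination (a1 * a2 * a3 * a4 * a5 * a6 * a7 * a8 * a9 * a10 * a11 * a12 * a12) * ih

lemma GG_prod : GG R * (EE R * expand 12 (by norm_num) (EE R)) ^ 4 =
    (expand 3 (by norm_num) (EE R) * expand 4 (by norm_num) (EE R)) ^ 4 := by
  apply ext_pr
  intro N
  refine ⟨12 * N + 1, by omega, ?_⟩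
  have h1 := pr_GG (R := R) (12 * N)
  have h2 := pr_EE (R := R) (le_refl (12 * N + 1))
  have h3 := pr_EEk (R := R) (k := 3) (by norm_num) (show 12 * N + 1 ≤ 3 * (4 * N + 1) by omega)
  have h4 := pr_EEk (R := R) (k := 4) (by norm_num) (show 12 * N + 1 ≤ 4 * (3 * N + 1) by omega)
  have h12 := pr_EEk (R := R) (k := 12) (by norm_num) (show 12 * N + 1 ≤ 12 * (N + 1) by omega)
  have hW := WW_mul (R := R) (allowed (12 * N)) (by
    intro x hx
    have := (mem_allowed.1 hx).2.1
    rcases Nat.eq_zero_or_pos x.1 with h | h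
    · rw [h] at this; simp at this
    · exact h)
  rw [prod_allowed] at hW
  simp only [map_mul, map_pow]
  rw [h1, h2, h3, h4, h12]
  simp only [← map_mul, ← map_pow]
  congr 1
  rw [← prod_twelve]
  linear_combination ((∏ i ∈ range (4 * N), (1 - (X : R⟦X⟧) ^ (3 * (i + 1)))) *
    (∏ i ∈ range (3 * N), (1 - (X : R⟦X⟧) ^ (4 * (i + 1))))) ^ 4 * hW
end

noncomputable section
variable {R : Type*} [CommRing R]

lemma sum_Icc_sym {A : Type*} [AddCommMonoid A] (F : ℤ → A) (M : ℕ) :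
    ∑ x ∈ Icc (-(M : ℤ)) M, F x = F 0 + ∑ i ∈ range M, (F (i + 1) + F (-(i + 1))) := by
  induction M with
  | zero => simp
  | succ M ih =>
    have : Icc (-((M + 1 : ℕ) : ℤ)) ((M + 1 : ℕ) : ℤ) =
      insert (-((M : ℤ) + 1)) (insert ((M : ℤ) + 1) (Icc (-(M : ℤ)) M)) := by
      ext x
      simp only [mem_insert, mem_Icc]
      push_cast
      omega
    rw [this, sum_insert, sum_insert, ih, sum_range_succ]
    · abel
    · simp
    · simp only [mem_insert, mem_Icc]; omega

lemma pr_phi_sym (N : ℕ) : pr N (1 + 2 * SS R) =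
    pr N (∑ x ∈ Icc (-(N : ℤ)) N, (-1) ^ x.natAbs * X ^ (x.natAbs ^ 2)) := by
  have h2 : pr N (SS R) = _ := pr_th (R := R) sq_le' (le_refl N)
  rw [map_add, map_mul, h2, ← map_mul, ← map_add, sum_Icc_sym, mul_sum]
  congr 2
  · simp
  · refine sum_congr rfl fun i _ => ?_
    have e1 : ((i : ℤ) + 1).natAbs = i + 1 := by omega
    have e2 : (-((i : ℤ) + 1)).natAbs = i + 1 := by omega
    rw [e1, e2]
    simp
    ring

lemma pr_psi_sym (N : ℕ) : pr N (psi R) =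
    pr N (∑ x ∈ Icc (-(N : ℤ)) N, X ^ (x * (2 * x + 1)).toNat) := by
  have h2 : pr N (psi R) = _ := pr_th (R := R) tri_le (show N ≤ 2 * N + 1 by omega)
  rw [h2, sum_Icc_sym, sum_range_succ', sum_range_two_mul, add_comm]
  congr 2
  · simp
  · refine sum_congr rfl fun i _ => ?_
    rw [tri_odd, show 2 * i + 1 + 1 = 2 * (i + 1) by ring, tri_even, add_comm]
    have e1 : (((i : ℤ) + 1) * (2 * ((i : ℤ) + 1) + 1)).toNat = (i + 1) * (2 * (i + 1) + 1) := by
      have : (((i : ℤ) + 1) * (2 * ((i : ℤ) + 1) + 1)) = (((i + 1) * (2 * (i + 1) + 1) : ℕ) : ℤ) := by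
        push_cast; ring
      rw [this, Int.toNat_natCast]
    have e2 : (-((i : ℤ) + 1) * (2 * -((i : ℤ) + 1) + 1)).toNat = (i + 1) * (2 * i + 1) := by
      have : (-((i : ℤ) + 1) * (2 * -((i : ℤ) + 1) + 1)) = (((i + 1) * (2 * i + 1) : ℕ) : ℤ) := by
        push_cast; ring
      rw [this, Int.toNat_natCast]
    rw [e1, e2]
    simp

lemma pr_expand_sum {k : ℕ} (hk : k ≠ 0) {N : ℕ} {f : R⟦X⟧} {ι : Type*} {s : Finset ι} {g : ι → ℕ}
    {w : ι → ℕ}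
    (h : pr N f = pr N (∑ x ∈ s, (-1) ^ w x * X ^ g x)) :
    pr N (expand k hk f) = pr N (∑ x ∈ s, (-1) ^ w x * X ^ (k * g x)) := by
  have h1 : N ≤ k * N := Nat.le_mul_of_pos_left _ (by omega)
  refine (pr_mono h1 (pr_expand hk h)).trans ?_
  simp [map_sum, pow_mul]

lemma pr_mul {N : ℕ} {a b a' b' : R⟦X⟧} (h : pr N a = pr N a') (h' : pr N b = pr N b') :
    pr N (a * b) = pr N (a' * b') := by
  rw [map_mul, h, h', map_mul]

lemma coeff_double {ι : Type*} (s : Finset ι) (g h : ι → ℕ) (v w : ι → ℕ) (n : ℕ) :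
    coeff n ((∑ x ∈ s, (-1 : R⟦X⟧) ^ v x * X ^ g x) * (∑ x ∈ s, (-1) ^ w x * X ^ h x)) =
    ∑ z ∈ (s ×ˢ s).filter (fun z => g z.1 + h z.2 = n), (-1) ^ (v z.1 + w z.2) := by
  rw [sum_mul_sum, ← sum_product', map_sum, sum_filter]
  refine sum_congr rfl fun z _ => ?_
  have : (-1 : R⟦X⟧) ^ v z.1 * X ^ g z.1 * ((-1) ^ w z.2 * X ^ h z.2) =
    C ((-1) ^ (v z.1 + w z.2)) * X ^ (g z.1 + h z.2) := by
    simp; ring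
  rw [this, coeff_C_mul, coeff_X_pow]
  simp [eq_comm]

def boxI (n : ℕ) : Finset (ℤ × ℤ) := Icc (-(n : ℤ)) n ×ˢ Icc (-(n : ℤ)) n

lemma natAbs_eqn (x y : ℤ) (n : ℕ) : (x.natAbs ^ 2 + 3 * y.natAbs ^ 2 = n) ↔ x ^ 2 + 3 * y ^ 2 = n := by
  rw [← Int.natAbs_sq x, ← Int.natAbs_sq y]
  norm_cast

lemma tri_nonneg (x : ℤ) : 0 ≤ x * (2 * x + 1) := by
  rcases le_or_gt 0 x with h | h
  · positivity
  · nlinarith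

lemma toNat_eqn (x y : ℤ) (a b n : ℕ) : (a * (x * (2 * x + 1)).toNat + b * (y * (2 * y + 1)).toNat = n) ↔
    a * (x * (2 * x + 1)) + b * (y * (2 * y + 1)) = (n : ℤ) := by
  have h1 := Int.toNat_of_nonneg (tri_nonneg x)
  have h2 := Int.toNat_of_nonneg (tri_nonneg y)
  rw [← h1, ← h2]
  simp only [Int.toNat_natCast]
  norm_cast

lemma coeff_psi_psi3 (n : ℕ) : coeff n (psi R * expand 3 (by norm_num) (psi R)) =
    (#((boxI (n + 1)).filter (fun z => z.1 * (2 * z.1 + 1) + 3 * (z.2 * (2 * z.2 + 1)) = (n : ℤ))) : R) := by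
  have h1 := pr_psi_sym (R := R) (n + 1)
  have h1' : pr (n + 1) (psi R) = pr (n + 1) (∑ x ∈ Icc (-((n + 1 : ℕ) : ℤ)) ((n + 1 : ℕ) : ℤ),
    (-1) ^ (0 : ℕ) * X ^ (x * (2 * x + 1)).toNat) := by simpa using h1
  have h2 := pr_expand_sum (k := 3) (by norm_num) (w := fun _ => 0) h1'
  have h3 := pr_mul h1' h2
  rw [pr_iff.1 h3 n (by omega), coeff_double _ _ _ (fun _ => 0) (fun _ => 0)]
  simp only [add_zero, pow_zero, sum_const, nsmul_eq_mul, mul_one]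
  congr 2
  refine filter_congr fun z _ => ?_
  have := toNat_eqn z.1 z.2 1 3 n
  push_cast at this
  simpa using this

lemma coeff_phi_phi3 (n : ℕ) (hn : n % 2 = 1) :
    coeff n ((1 + 2 * SS R) * expand 3 (by norm_num) (1 + 2 * SS R)) =
    -(#((boxI (n + 1)).filter (fun z => z.1 ^ 2 + 3 * z.2 ^ 2 = (n : ℤ))) : R) := by
  have h1 := pr_phi_sym (R := R) (n + 1)
  have h2 := pr_expand_sum (k := 3) (by norm_num) h1
  have h3 := pr_mul h1 h2
  rw [pr_iff.1 h3 n (by omega), coeff_double]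
  simp only [natAbs_eqn]
  have : ∀ z ∈ ((Icc (-((n + 1 : ℕ) : ℤ)) ((n + 1 : ℕ) : ℤ)) ×ˢ (Icc (-((n + 1 : ℕ) : ℤ)) ((n + 1 : ℕ) : ℤ))).filter
    (fun z => z.1 ^ 2 + 3 * z.2 ^ 2 = (n : ℤ)), (-1 : R) ^ (z.1.natAbs + z.2.natAbs) = -1 := by
    intro z hz
    have h := (mem_filter.1 hz).2
    apply Odd.neg_one_pow
    rw [← natAbs_eqn] at h
    rw [Nat.odd_iff]
    rcases Nat.mod_two_eq_zero_or_one z.1.natAbs with h1 | h1 <;>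
    rcases Nat.mod_two_eq_zero_or_one z.2.natAbs with h2 | h2 <;>
    · have := congrArg (· % 2) h
      simp [pow_two, Nat.add_mod, Nat.mul_mod, h1, h2, hn] at this ⊢
  rw [sum_congr rfl this]
  simp [boxI]

lemma sq_bound {x : ℤ} {n : ℤ} (h : x ^ 2 ≤ n) : -n ≤ x ∧ x ≤ n := by
  constructor <;> nlinarith [sq_nonneg (x + 1), sq_nonneg (x - 1), sq_nonneg x, Int.le_self_sq x,
    Int.le_self_sq (-x)]

lemma tri_bound {x : ℤ} {n : ℤ} (h : x * (2 * x + 1) ≤ n) : -n ≤ x ∧ x ≤ n := by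
  apply sq_bound
  have := Int.le_self_sq (-x)
  nlinarith

lemma card_AB (m : ℕ) :
    #((boxI (2 * m + 1 + 1)).filter (fun z => z.1 ^ 2 + 3 * z.2 ^ 2 = ((2 * m + 1 : ℕ) : ℤ))) =
    2 * #((boxI (m + 1)).filter (fun z => z.1 * (2 * z.1 + 1) + 3 * (z.2 * (2 * z.2 + 1)) = (m : ℤ))) := by
  have par : ∀ x y : ℤ, x ^ 2 + 3 * y ^ 2 = 2 * m + 1 → (x - y) % 2 = 1 := by
    intro x y h
    rcases Int.emod_two_eq_zero_or_one (x - y) with h1 | h1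
    · exfalso
      obtain ⟨t, ht⟩ := Int.dvd_of_emod_eq_zero h1
      have : x = y + 2 * t := by omega
      subst this
      ring_nf at h
      omega
    · exact h1
  rw [← card_filter_add_card_filter_not (fun z : ℤ × ℤ => (z.1 - z.2) % 4 = 1), two_mul (#_)]
  congr 1
  · apply card_nbij' (fun z => (z.2 + (z.1 - z.2 - 1) / 4, (z.1 - z.2 - 1) / 4))
      (fun w => (3 * w.2 + w.1 + 1, w.1 - w.2))
    · rintro ⟨x, y⟩ hz
      simp only [boxI, coe_filter, mem_filter, mem_product, mem_Icc, Set.mem_ofPred_eq] at hz ⊢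
      obtain ⟨⟨_, h1⟩, h2⟩ := hz
      obtain ⟨k, hk⟩ : ∃ k, k = (x - y - 1) / 4 := ⟨_, rfl⟩
      rw [← hk]
      have hx : x = y + 4 * k + 1 := by omega
      push_cast at h1
      have h3 : (y + k) * (2 * (y + k) + 1) + 3 * (k * (2 * k + 1)) = (m : ℤ) := by
        subst hx; linarith
      have t1 := tri_nonneg (y + k)
      have t2 := tri_nonneg k
      have b1 := tri_bound (x := y + k) (n := m) (by linarith)
      have b2 := tri_bound (x := k) (n := m) (by linarith)
      push_cast
      exact ⟨⟨⟨by linarith, by linarith⟩, by linarith, by linarith⟩, h3⟩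
    · rintro ⟨j, k⟩ hz
      simp only [boxI, coe_filter, mem_filter, mem_product, mem_Icc, Set.mem_ofPred_eq] at hz ⊢
      obtain ⟨_, h1⟩ := hz
      push_cast
      have h3 : (3 * k + j + 1) ^ 2 + 3 * (j - k) ^ 2 = 2 * (m : ℤ) + 1 := by linarith
      have b1 := sq_bound (x := 3 * k + j + 1) (n := 2 * m + 1) (by nlinarith)
      have b2 := sq_bound (x := j - k) (n := 2 * m + 1) (by nlinarith)
      exact ⟨⟨⟨⟨by linarith, by linarith⟩, by linarith, by linarith⟩, h3⟩, by omega⟩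
    · rintro ⟨x, y⟩ hz
      simp only [boxI, coe_filter, mem_filter, mem_product, mem_Icc, Set.mem_ofPred_eq] at hz ⊢
      ext <;> simp <;> omega
    · rintro ⟨j, k⟩ hz
      ext <;> simp <;> omega
  · apply card_nbij' (fun z => (-z.2 + (-z.1 + z.2 - 1) / 4, (-z.1 + z.2 - 1) / 4))
      (fun w => (-(3 * w.2 + w.1 + 1), -(w.1 - w.2)))
    · rintro ⟨x, y⟩ hz
      simp only [boxI, coe_filter, mem_filter, mem_product, mem_Icc, Set.mem_ofPred_eq] at hz ⊢
      obtain ⟨⟨_, h1⟩, h2⟩ := hz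
      push_cast at h1
      have := par x y h1
      obtain ⟨k, hk⟩ : ∃ k, k = (-x + y - 1) / 4 := ⟨_, rfl⟩
      rw [← hk]
      have hx : x = y - 4 * k - 1 := by omega
      have h3 : (-y + k) * (2 * (-y + k) + 1) + 3 * (k * (2 * k + 1)) = (m : ℤ) := by
        subst hx; linarith
      have t1 := tri_nonneg (-y + k)
      have t2 := tri_nonneg k
      have b1 := tri_bound (x := -y + k) (n := m) (by linarith)
      have b2 := tri_bound (x := k) (n := m) (by linarith)
      push_cast
      exact ⟨⟨⟨by linarith, by linarith⟩, by linarith, by linarith⟩, h3⟩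
    · rintro ⟨j, k⟩ hz
      simp only [boxI, coe_filter, mem_filter, mem_product, mem_Icc, Set.mem_ofPred_eq] at hz ⊢
      obtain ⟨_, h1⟩ := hz
      push_cast
      have h3 : (-(3 * k + j + 1)) ^ 2 + 3 * (-(j - k)) ^ 2 = 2 * (m : ℤ) + 1 := by linarith
      have b1 := sq_bound (x := -(3 * k + j + 1)) (n := 2 * m + 1) (by nlinarith)
      have b2 := sq_bound (x := -(j - k)) (n := 2 * m + 1) (by nlinarith)
      exact ⟨⟨⟨⟨by linarith, by linarith⟩, by linarith, by linarith⟩, h3⟩, by omega⟩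
    · rintro ⟨x, y⟩ hz
      simp only [boxI, coe_filter, mem_filter, mem_product, mem_Icc, Set.mem_ofPred_eq] at hz ⊢
      obtain ⟨⟨_, h1⟩, h2⟩ := hz
      push_cast at h1
      have := par x y h1
      ext <;> simp <;> omega
    · rintro ⟨j, k⟩ hz
      ext <;> simp <;> omega

lemma theta_odd (m : ℕ) :
    coeff (2 * m + 1) ((1 + 2 * SS R) * expand 3 (by norm_num) (1 + 2 * SS R)) =
    -2 * coeff m (psi R * expand 3 (by norm_num) (psi R)) := by
  rw [coeff_phi_phi3 _ (by omega), coeff_psi_psi3, card_AB]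
  push_cast
  ring

lemma parity (k : ℕ) (h1 : k % 2 = 1) (h2 : k % 12 ≠ 1) :
    coeff k (psi (ZMod 2) * expand 3 (by norm_num) (psi (ZMod 2))) = 0 := by
  rw [coeff_psi_psi3, ← mul_one (Nat.cast _), ← nsmul_eq_mul, ← sum_const]
  apply sum_involution (fun z _ => if (z.1 + z.2) % 2 = 0 then ((3 * z.2 - z.1) / 2, (z.1 + z.2) / 2)
    else ((z.1 - 3 * z.2 - 1) / 2, -((z.1 + z.2 + 1) / 2)))
  · intro _ _; decide
  · rintro ⟨i, j⟩ hz _ hf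
    replace hz := (mem_filter.1 hz).2
    simp only at hz hf
    split_ifs at hf with h
    · rw [Prod.mk.injEq] at hf
      have : i = j := by omega
      subst this
      have : 2 * (2 * (i * (2 * i + 1))) = (k : ℤ) := by linarith
      omega
    · rw [Prod.mk.injEq] at hf
      have : i = -3 * j - 1 := by omega
      subst this
      have : 12 * (2 * j ^ 2 + j) + 1 = (k : ℤ) := by linarith
      omega
  swap
  · rintro ⟨i, j⟩ hz
    simp only [boxI, mem_filter, mem_product, mem_Icc] at hz ⊢
    obtain ⟨_, hz⟩ := hz
    have key : ∀ i' j' : ℤ, i' * (2 * i' + 1) + 3 * (j' * (2 * j' + 1)) = (k : ℤ) →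
      (((-((k + 1 : ℕ) : ℤ) ≤ i' ∧ i' ≤ ((k + 1 : ℕ) : ℤ)) ∧ (-((k + 1 : ℕ) : ℤ) ≤ j' ∧ j' ≤ ((k + 1 : ℕ) : ℤ))) ∧
        i' * (2 * i' + 1) + 3 * (j' * (2 * j' + 1)) = (k : ℤ)) := by
      intro i' j' h
      have t1 := tri_nonneg i'
      have t2 := tri_nonneg j'
      have b1 := tri_bound (x := i') (n := k) (by linarith)
      have b2 := tri_bound (x := j') (n := k) (by linarith)
      push_cast
      exact ⟨⟨⟨by linarith, by linarith⟩, by linarith, by linarith⟩, h⟩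
    split_ifs with h
    · apply key
      obtain ⟨t, ht⟩ := Int.dvd_of_emod_eq_zero h
      have e : i = 2 * t - j := by omega
      have e1 : (3 * j - i) / 2 = 2 * j - t := by omega
      have e2 : (i + j) / 2 = t := by omega
      simp only [e1, e2]
      rw [← hz, e]; ring
    · apply key
      obtain ⟨t, ht⟩ : ∃ t, t = (i + j + 1) / 2 := ⟨_, rfl⟩
      have e : i = 2 * t - j - 1 := by omega
      have e1 : (i - 3 * j - 1) / 2 = t - 2 * j - 1 := by omega
      simp only [e1, ← ht]
      rw [← hz, e]; ring
  · rintro ⟨i, j⟩ hz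
    dsimp only
    by_cases h : (i + j) % 2 = 0
    · simp only [if_pos h]
      split_ifs with h' <;> ext <;> dsimp only at h' ⊢ <;> omega
    · simp only [if_neg h]
      split_ifs with h' <;> ext <;> dsimp only at h' ⊢ <;> omega
end

noncomputable section
variable {R : Type*} [CommRing R]

lemma EE_inv : ∃ I : R⟦X⟧, EE R * I = 1 := by
  have : IsUnit (EE R) := by
    rw [PowerSeries.isUnit_iff_constantCoeff]
    rw [← coeff_zero_eq_constantCoeff_apply]
    simp [EE]
  exact this.exists_right_inv

lemma frob (p : ℕ) [Fact p.Prime] (hp : p ≠ 0) (f : (ZMod p)⟦X⟧) : f ^ p = expand p hp f := by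
  have h := MvPowerSeries.map_frobenius_expand (σ := Unit) (R := ZMod p) p hp (f := f)
  rw [ZMod.frobenius_zmod] at h
  rw [MvPowerSeries.map_id] at h
  exact h.symm

/-- a power series supported on multiples of `2` -/
def IsEv (f : R⟦X⟧) : Prop := ∀ n, n % 2 = 1 → coeff n f = 0

lemma IsEv.add {f g : R⟦X⟧} (hf : IsEv f) (hg : IsEv g) : IsEv (f + g) := fun n hn => by
  rw [map_add, hf n hn, hg n hn, add_zero]

lemma IsEv.mul {f g : R⟦X⟧} (hf : IsEv f) (hg : IsEv g) : IsEv (f * g) := fun n hn => by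
  rw [coeff_mul]
  refine sum_eq_zero fun z hz => ?_
  have := mem_antidiagonal.1 hz
  rcases Nat.mod_two_eq_zero_or_one z.1 with h | h
  · rw [hg z.2 (by omega), mul_zero]
  · rw [hf z.1 h, zero_mul]

lemma IsEv.pow {f : R⟦X⟧} (hf : IsEv f) (k : ℕ) : IsEv (f ^ k) := by
  induction k with
  | zero =>
    intro n hn
    rw [pow_zero, coeff_one, if_neg (by omega)]
  | succ k ih => rw [pow_succ]; exact ih.mul hf

lemma isEv_expand {k : ℕ} (hk : k ≠ 0) (h : 2 ∣ k) (f : R⟦X⟧) : IsEv (expand k hk f) := fun n hn => by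
  apply coeff_expand_of_not_dvd
  intro h'
  have := h.trans h'
  omega

lemma exex (a b c : ℕ) (ha : a ≠ 0) (hb : b ≠ 0) (hc : c ≠ 0) (h : a * b = c) (f : R⟦X⟧) :
    expand a ha (expand b hb f) = expand c hc f := by
  subst h
  rw [expand_mul]

lemma mod3 (n : ℕ) (hn : 1 ≤ n) : coloredRegular 4 3 4 (2 * n + 1) ≡ 0 [MOD 3] := by
  rw [← ZMod.natCast_eq_natCast_iff]
  have hG := GG_prod (R := ZMod 3)
  obtain ⟨I, hI⟩ := EE_inv (R := ZMod 3)
  have hphi := phi_prod (R := ZMod 3)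
  have hpsi := psi_prod (R := ZMod 3)
  set E := EE (ZMod 3) with hE
  have fr := fun f => frob 3 (by norm_num) f
  have hE3 := fr E
  have hE12 := fr (expand 4 (by norm_num) E)
  rw [exex 3 4 12 _ _ (by norm_num) rfl] at hE12
  rw [← hE3, ← hE12] at hG
  have hpsi2 := congrArg (expand 2 (by norm_num)) hpsi
  rw [map_mul, map_pow, exex 2 2 4 _ _ (by norm_num) rfl] at hpsi2
  have hI4 := congrArg (expand 4 (by norm_num)) hI
  rw [map_mul, map_one] at hI4
  set E4 := expand 4 (by norm_num) E
  set I4 := expand 4 (by norm_num) I with hI4def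
  set E2 := expand 2 (by norm_num) E with hE2def
  set P2 := expand 2 (by norm_num) (psi (ZMod 3)) with hP2
  set φ := 1 + 2 * SS (ZMod 3) with hφ
  -- odd part
  have hev : IsEv (φ ^ 4 - X * P2 ^ 4) := by
    intro k hk
    obtain ⟨m, rfl⟩ : ∃ m, k = 2 * m + 1 := ⟨k / 2, by omega⟩
    have h1 := theta_odd (R := ZMod 3) m
    rw [← fr, ← fr, ← hφ] at h1
    have h2 : P2 ^ 4 = expand 2 (by norm_num) (psi (ZMod 3) * psi (ZMod 3) ^ 3) := by
      rw [map_mul, map_pow, ← hP2]; ring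
    rw [map_sub, h2, coeff_succ_X_mul, coeff_expand_mul, show φ ^ 4 = φ * φ ^ 3 by ring, h1]
    have : (-2 : ZMod 3) = 1 := by decide
    rw [this, one_mul, sub_self]
  have hG2 : GG (ZMod 3) * E4 ^ 8 = E ^ 8 := by
    have hI4p : (E4 * I4) ^ 4 = 1 := by rw [hI4, one_pow]
    have hIp : (E * I) ^ 4 = 1 := by rw [hI, one_pow]
    have : GG (ZMod 3) * E4 ^ 8 * ((E * I) ^ 4 * (E4 * I4) ^ 4) = E ^ 8 * ((E * I) ^ 4 * (E4 * I4) ^ 4) := by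
      linear_combination (I ^ 4 * I4 ^ 4) * hG
    rwa [hIp, hI4p, one_mul, mul_one, mul_one] at this
  have hG3 : GG (ZMod 3) = X + (φ ^ 4 - X * P2 ^ 4) * E2 ^ 4 * I4 ^ 8 := by
    have hI8 : (E4 * I4) ^ 8 = 1 := by rw [hI4, one_pow]
    have e1 : E ^ 8 = φ ^ 4 * E2 ^ 4 := by
      rw [show E ^ 8 = (E ^ 2) ^ 4 by ring, ← hphi]; ring
    have e2 : P2 ^ 4 * E2 ^ 4 = E4 ^ 8 := by
      rw [← mul_pow, hpsi2]; ring
    linear_combination (I4 ^ 8) * hG2 + I4 ^ 8 * e1 + (X - GG (ZMod 3)) * hI8 + X * I4 ^ 8 * e2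
  have hc := congrArg (coeff (2 * n + 1)) hG3
  rw [map_add, (hev.mul ((isEv_expand _ (by norm_num) _).pow 4)).mul
    ((isEv_expand _ (by norm_num) _).pow 8) _ (by omega), add_zero, coeff_X, if_neg (by omega)] at hc
  simpa [GG] using hc

lemma SS_split : SS (ZMod 2) = X * expand 8 (by norm_num) (psi (ZMod 2)) +
    expand 4 (by norm_num) (SS (ZMod 2)) := by
  apply ext_pr
  intro N
  refine ⟨N, le_rfl, ?_⟩
  have h1 : pr N (SS (ZMod 2)) = _ := pr_th (R := ZMod 2) sq_le' (show N ≤ 2 * N by omega)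
  have h2 : pr N (expand 4 (by norm_num) (SS (ZMod 2))) = _ :=
    pr_thk (R := ZMod 2) (k := 4) (by norm_num) sq_le' (le_refl N)
  have h3 : pr N (expand 8 (by norm_num) (psi (ZMod 2))) = _ :=
    pr_thk (R := ZMod 2) (k := 8) (by norm_num) tri_le (le_refl N)
  rw [map_add, map_mul, h1, h2, h3, ← map_mul, ← map_add, sum_range_two_mul, mul_sum,
    ← sum_add_distrib]
  congr 1
  refine sum_congr rfl fun a _ => ?_
  have e : (-1 : ZMod 2) = 1 := by decide
  simp only [e, one_pow, map_one, one_mul]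
  rw [← pow_succ']
  congr 2
  · have : 2 * (a * (a + 1) / 2) = a * (a + 1) :=
      Nat.mul_div_cancel' (Nat.even_mul_succ_self a).two_dvd
    linarith [this]
  · ring

lemma map_th {S : Type*} [CommRing S] (F : R →+* S) (w : ℕ → R) (g : ℕ → ℕ) :
    PowerSeries.map F (th w g) = th (fun x => F (w x)) g := by
  ext n
  simp only [th, coeff_map, coeff_mk, map_sum]
  refine sum_congr rfl fun x _ => ?_
  split_ifs <;> simp

lemma map_SS {S : Type*} [CommRing S] (F : R →+* S) : PowerSeries.map F (SS R) = SS S := by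
  rw [SS, map_th, SS]; simp

lemma map_EE {S : Type*} [CommRing S] (F : R →+* S) : PowerSeries.map F (EE R) = EE S := by
  ext n
  simp only [EE, coeff_map, coeff_mk]
  rw [← coeff_map]
  simp [map_prod]

lemma mod8 (m : ℕ) (hm : m % 6 ≠ 0) : coloredRegular 4 3 4 (8 * m + 7) ≡ 0 [MOD 8] := by
  have hG := GG_prod (R := ℤ)
  obtain ⟨I, hI⟩ := EE_inv (R := ℤ)
  have hphi := phi_prod (R := ℤ)
  have hphi3 := congrArg (expand 3 (by norm_num)) hphi
  rw [map_mul, exex 3 2 6 _ _ (by norm_num) rfl, map_pow, map_add, map_one, map_mul, map_ofNat] at hphi3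
  have hI2 := congrArg (expand 2 (by norm_num)) hI
  have hI12 := congrArg (expand 12 (by norm_num)) hI
  rw [map_mul, map_one] at hI2 hI12
  set E := EE ℤ with hE
  set E2 := expand 2 (by norm_num) E with hE2
  set E3 := expand 3 (by norm_num) E with hE3
  set E4 := expand 4 (by norm_num) E with hE4
  set E6 := expand 6 (by norm_num) E with hE6
  set E12 := expand 12 (by norm_num) E with hE12
  set I2 := expand 2 (by norm_num) I with hI2def
  set I12 := expand 12 (by norm_num) I with hI12def
  set S := SS ℤ with hS
  set S3 := expand 3 (by norm_num) S with hS3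
  set G := GG ℤ with hGdef
  set H := E6 ^ 2 * E4 ^ 4 * I2 ^ 2 * I12 ^ 4 with hH
  have hHev : IsEv H :=
    ((((isEv_expand _ (by norm_num) _).pow 2).mul ((isEv_expand _ (by norm_num) _).pow 4)).mul
      ((isEv_expand _ (by norm_num) _).pow 2)).mul ((isEv_expand _ (by norm_num) _).pow 4)
  have h1 : G * (1 + 2 * S) ^ 2 = (1 + 2 * S3) ^ 2 * H := by
    have e1 : (E2 * I2) ^ 2 = 1 := by rw [hI2, one_pow]
    have e2 : (E12 * I12) ^ 4 = 1 := by rw [hI12, one_pow]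
    have e3 : G * ((1 + 2 * S) * E2) ^ 2 * E12 ^ 4 = ((1 + 2 * S3) * E6) ^ 2 * E4 ^ 4 := by
      rw [hphi, hphi3]; linear_combination hG
    have : G * (1 + 2 * S) ^ 2 * ((E2 * I2) ^ 2 * (E12 * I12) ^ 4) = (1 + 2 * S3) ^ 2 * H := by
      rw [hH]; linear_combination (I2 ^ 2 * I12 ^ 4) * e3
    rwa [e1, e2, one_mul, mul_one] at this
  set A := ((S3 + S3 ^ 2) - (S + S ^ 2)) * H with hA
  have h2 : ∃ B, G = H + 4 * A + 8 * B :=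
    ⟨2 * (G * (S + S ^ 2) ^ 2 - (S + S ^ 2) * (S3 + S3 ^ 2) * H), by
      rw [hA]; linear_combination (1 - 4 * (S + S ^ 2)) * h1⟩
  obtain ⟨B, hB⟩ := h2
  -- reduce `A` modulo 2
  have h3 : ((coeff (8 * m + 7) A : ℤ) : ZMod 2) = 0 := by
    let F : ℤ →+* ZMod 2 := Int.castRingHom (ZMod 2)
    have e0 : ((coeff (8 * m + 7) A : ℤ) : ZMod 2) = coeff (8 * m + 7) (PowerSeries.map F A) := by
      rw [coeff_map]; rfl
    rw [e0]
    have fr := fun f => frob 2 (by norm_num) f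
    set e := EE (ZMod 2) with he
    set i := PowerSeries.map F I with hi
    have hei : e * i = 1 := by
      have := congrArg (PowerSeries.map F) hI
      rwa [map_mul, map_one, hE, map_EE] at this
    set s := SS (ZMod 2) with hs
    set p := psi (ZMod 2) with hp
    have hpe : p = e ^ 3 := by
      have := psi_prod (R := ZMod 2)
      rw [← fr, ← he] at this
      calc p = p * (e * i) := by rw [hei, mul_one]
        _ = (p * e) * i := by ring
        _ = (e ^ 2) ^ 2 * i := by rw [this]
        _ = e ^ 3 * (e * i) := by ring
        _ = e ^ 3 := by rw [hei, mul_one]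
    set e3 := expand 3 (by norm_num) e with he3
    set i3 := expand 3 (by norm_num) i with hi3
    have hei3 : e3 * i3 = 1 := by rw [he3, hi3, ← map_mul, hei, map_one]
    -- image of H
    have hHm : PowerSeries.map F H = expand 4 (by norm_num) (e ^ 3 * i3 ^ 3) := by
      rw [hH, hE6, hE4, hI2def, hI12def]
      simp only [map_mul, map_pow, map_expand]
      rw [hE, map_EE, ← he, ← hi, fr, fr, exex 2 6 12 _ _ (by norm_num) rfl,
        exex 2 2 4 _ _ (by norm_num) rfl, ← exex 4 3 12 (by norm_num) (by norm_num) _ rfl e,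
        ← exex 4 3 12 (by norm_num) (by norm_num) _ rfl i, ← he3, ← hi3]
      simp only [← map_mul, ← map_pow]
      congr 1
      linear_combination e ^ 4 * i * i3 ^ 3 * hei3 + e ^ 3 * i3 ^ 3 * hei
    have hAm : PowerSeries.map F A = X ^ 3 * expand 4 (by norm_num) (p * expand 3 (by norm_num) p)
       - X * (expand 4 (by norm_num) (expand 2 (by norm_num) p * (e ^ 3 * i3 ^ 3)))
       + (expand 12 (by norm_num) s + expand 6 (by norm_num) s - expand 4 (by norm_num) s
          - expand 2 (by norm_num) s) * PowerSeries.map F H := by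
      have hs3 : PowerSeries.map F S3 = X ^ 3 * expand 24 (by norm_num) p + expand 12 (by norm_num) s := by
        rw [hS3, map_expand, hS, map_SS, SS_split, map_add, map_mul, expand_X,
          exex 3 8 24 _ _ (by norm_num) rfl, exex 3 4 12 _ _ (by norm_num) rfl]
      have hs3' : (PowerSeries.map F S3) ^ 2 = expand 6 (by norm_num) s := by
        rw [hS3, map_expand, hS, map_SS, fr, exex 2 3 6 _ _ (by norm_num) rfl]
      have hs1 : PowerSeries.map F S = X * expand 8 (by norm_num) p + expand 4 (by norm_num) s := by
        rw [hS, map_SS]; exact SS_split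
      have hs1' : (PowerSeries.map F S) ^ 2 = expand 2 (by norm_num) s := by
        rw [hS, map_SS, fr]
      have hp6 : expand 6 (by norm_num) p * (e ^ 3 * i3 ^ 3) = p * expand 3 (by norm_num) p := by
        have : expand 6 (by norm_num) p = (expand 3 (by norm_num) p) ^ 2 := by
          rw [fr, exex 2 3 6 _ _ (by norm_num) rfl]
        rw [this, hpe, map_pow, ← he3]
        have h9 : (e3 * i3) ^ 3 = 1 := by rw [hei3, one_pow]
        linear_combination (e ^ 3 * e3 ^ 3) * h9
      have hp24 : expand 24 (by norm_num) p * expand 4 (by norm_num) (e ^ 3 * i3 ^ 3) =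
          expand 4 (by norm_num) (p * expand 3 (by norm_num) p) := by
        rw [← exex 4 6 24 (by norm_num) (by norm_num) _ rfl p, ← map_mul, hp6]
      have hp8 : expand 8 (by norm_num) p * expand 4 (by norm_num) (e ^ 3 * i3 ^ 3) =
          expand 4 (by norm_num) (expand 2 (by norm_num) p * (e ^ 3 * i3 ^ 3)) := by
        rw [← exex 4 2 8 (by norm_num) (by norm_num) _ rfl p, ← map_mul]
      rw [← hp24, ← hp8, hA, map_mul, map_sub, map_add, map_add, map_pow, map_pow, hs3', hs1',
        hs3, hs1, hHm]
      ring
    have hev : IsEv (expand 12 (by norm_num) s + expand 6 (by norm_num) s - expand 4 (by norm_num) s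
          - expand 2 (by norm_num) s) := by
      intro k hk
      rw [map_sub, map_sub, map_add, isEv_expand _ (by norm_num) _ k hk,
        isEv_expand _ (by norm_num) _ k hk, isEv_expand _ (by norm_num) _ k hk,
        isEv_expand _ (by norm_num) _ k hk]
      simp
    have hHmev : IsEv (PowerSeries.map F H) := by
      rw [hHm]; exact isEv_expand _ (by norm_num) _
    rw [hAm, map_add, (hev.mul hHmev) _ (by omega), add_zero, map_sub,
      show 8 * m + 7 = 8 * m + 6 + 1 by ring, coeff_succ_X_mul,
      coeff_expand_of_not_dvd _ _ _ (by omega), sub_zero,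
      show 8 * m + 6 + 1 = 4 * (2 * m + 1) + 3 by ring, coeff_X_pow_mul, coeff_expand_mul]
    exact parity _ (by omega) (by omega)
  have hc := congrArg (coeff (8 * m + 7)) hB
  rw [map_add, map_add, hHev _ (by omega), zero_add,
    show (4 : ℤ⟦X⟧) = C 4 from (map_ofNat _ 4).symm, show (8 : ℤ⟦X⟧) = C 8 from (map_ofNat _ 8).symm,
    coeff_C_mul, coeff_C_mul] at hc
  rw [ZMod.intCast_zmod_eq_zero_iff_dvd] at h3
  simp only [hGdef, GG, coeff_mk] at hc
  rw [Nat.modEq_zero_iff_dvd]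
  push_cast at h3
  generalize coeff (8 * m + 7) A = a at *
  generalize coeff (8 * m + 7) B = b at *
  omega

lemma at_one : coloredRegular 4 3 4 1 = 4 := by
  have h := WW_mul (R := ℤ) (allowed 1) (fun x hx => (by
    have := mem_allowed.1 hx
    omega))
  rw [prod_allowed] at h
  have e : (∏ j ∈ range 1, if ¬ 3 ∣ (j + 1) ∧ ¬ 4 ∣ (j + 1) then (1 - (X : ℤ⟦X⟧) ^ (j + 1)) else 1) ^ 4
      = 1 - X * 4 + X * (X * (6 - X * 4 + X ^ 2)) := by
    simp
    ring
  rw [e] at h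
  have h' : WW ℤ (allowed 1) = 1 + X * (WW ℤ (allowed 1) * C (4 : ℤ)) -
      X * (X * (WW ℤ (allowed 1) * (6 - X * 4 + X ^ 2))) := by
    rw [show C (4 : ℤ) = (4 : ℤ⟦X⟧) from map_ofNat C 4]
    linear_combination h
  have h0 := congrArg (coeff 0) h'
  have h1 := congrArg (coeff 1) h'
  have c1 : coeff 1 (WW ℤ (allowed 1)) = (coloredRegular 4 3 4 1 : ℤ) := by
    unfold WW
    rw [coeff_mk, cnt_allowed le_rfl]
  simp only [map_sub, map_add, coeff_zero_X_mul, coeff_zero_one] at h0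
  rw [map_sub, map_add, show (1 : ℕ) = 0 + 1 from rfl, coeff_succ_X_mul, coeff_succ_X_mul,
    coeff_zero_X_mul, coeff_mul_C, h0, coeff_one] at h1
  norm_num at h1
  rw [c1] at h1
  exact_mod_cast h1

end

end Helpers

theorem stmt_7 :
    (∀ n : ℕ, ∀ i ∈ ({2, 3, 4, 5} : Finset ℕ),
      coloredRegular 4 3 4 (48 * n + 8 * i + 7) ≡ 0 [MOD 8]) ∧
    coloredRegular 4 3 4 1 = 4 ∧ coloredRegular 4 3 4 1 ≡ 4 [MOD 3] ∧
    (∀ n : ℕ, 1 ≤ n → coloredRegular 4 3 4 (2 * n + 1) ≡ 0 [MOD 3]) := by 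
  refine ⟨?_, at_one, by rw [at_one], mod3⟩
  intro n i hi
  have h := mod8 (6 * n + i) (by simp at hi; omega)
  rwa [show 48 * n + 8 * i + 7 = 8 * (6 * n + i) + 7 by ring]
end

section
/- Let p ≥ 5 be a prime with (−2/p) = −1 (Legendre symbol). Then for all nonnegative integers k and m with p ∤ m, b^4_{3,4}(16·p^{2k+1}·m + 2·p^{2k+2} + 1) ≡ 0 (mod 8) and b^4_{3,4}(48·p^{2k+1}·m + 6·p^{2k+2} + 1) ≡ 0 (mod 8). -/
namespace S9
open PowerSeries Finset

/-- Pairs of odd naturals with `x^2 + 3 y^2 = 4 M`. -/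
def P (M : ℕ) : Finset (ℕ × ℕ) :=
  ((range (4 * M + 1)) ×ˢ (range (4 * M + 1))).filter
    fun z => z.1 % 2 = 1 ∧ z.2 % 2 = 1 ∧ z.1 ^ 2 + 3 * z.2 ^ 2 = 4 * M

lemma mem_P {M : ℕ} {z : ℕ × ℕ} : z ∈ P M ↔
    z.1 % 2 = 1 ∧ z.2 % 2 = 1 ∧ z.1 ^ 2 + 3 * z.2 ^ 2 = 4 * M := by
  unfold P
  simp only [mem_filter, mem_product, mem_range, and_iff_right_iff_imp]
  rintro ⟨_, _, h⟩
  constructor <;> nlinarith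

/-- The involution. -/
def g (z : ℕ × ℕ) : ℕ × ℕ :=
  if z.1 % 4 = z.2 % 4 then (((3 * z.2 - z.1 : ℤ)).natAbs / 2, (z.1 + z.2) / 2)
  else ((3 * z.2 + z.1) / 2, ((z.1 - z.2 : ℤ)).natAbs / 2)

lemma g_eq {x y : ℕ} (hx : x % 2 = 1) (hy : y % 2 = 1) :
    (g (x, y)).1 ^ 2 + 3 * (g (x, y)).2 ^ 2 = x ^ 2 + 3 * y ^ 2 := by
  unfold g
  split_ifs with h
  · simp only at h ⊢
    obtain ⟨a, ha⟩ : ∃ a : ℤ, (3 * y - x : ℤ) = 2 * a := ⟨(3 * y - x) / 2, by omega⟩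
    obtain ⟨b, hb⟩ : ∃ b : ℕ, x + y = 2 * b := ⟨(x + y) / 2, by omega⟩
    have h1 : (3 * y - x : ℤ).natAbs / 2 = a.natAbs := by omega
    have h2 : (x + y) / 2 = b := by omega
    rw [h1, h2]
    zify
    rw [sq_abs]
    have hb' : (x + y : ℤ) = 2 * b := by exact_mod_cast hb
    have : 4 * (a ^ 2 + 3 * (b : ℤ) ^ 2) = 4 * (x ^ 2 + 3 * y ^ 2) := by
      calc 4 * (a ^ 2 + 3 * (b : ℤ) ^ 2) = (2 * a) ^ 2 + 3 * (2 * b) ^ 2 := by ring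
        _ = _ := by rw [← ha, ← hb']; ring
    linarith
  · simp only at h ⊢
    obtain ⟨a, ha⟩ : ∃ a : ℤ, (x - y : ℤ) = 2 * a := ⟨(x - y) / 2, by omega⟩
    obtain ⟨b, hb⟩ : ∃ b : ℕ, 3 * y + x = 2 * b := ⟨(3 * y + x) / 2, by omega⟩
    have h1 : (x - y : ℤ).natAbs / 2 = a.natAbs := by omega
    have h2 : (3 * y + x) / 2 = b := by omega
    rw [h1, h2]
    zify
    rw [sq_abs]
    have hb' : (3 * y + x : ℤ) = 2 * b := by exact_mod_cast hb
    have : 4 * ((b : ℤ) ^ 2 + 3 * a ^ 2) = 4 * (x ^ 2 + 3 * y ^ 2) := by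
      calc 4 * ((b : ℤ) ^ 2 + 3 * a ^ 2) = (2 * b) ^ 2 + 3 * (2 * a) ^ 2 := by ring
        _ = _ := by rw [← ha, ← hb']; ring
    linarith

lemma g_odd {x y : ℕ} (hx : x % 2 = 1) (hy : y % 2 = 1) :
    (g (x, y)).1 % 2 = 1 ∧ (g (x, y)).2 % 2 = 1 := by
  unfold g
  split_ifs with h
  · simp only at h ⊢
    omega
  · simp only at h ⊢
    omega

lemma g_invol {x y : ℕ} (hx : x % 2 = 1) (hy : y % 2 = 1) : g (g (x, y)) = (x, y) := by
  by_cases h : x % 4 = y % 4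
  · have h1 : g (x, y) = (((3 * y - x : ℤ)).natAbs / 2, (x + y) / 2) := by simp [g, h]
    rw [h1]
    unfold g
    split_ifs with h' <;> simp only [Prod.mk.injEq] at h' ⊢ <;> omega
  · have h1 : g (x, y) = ((3 * y + x) / 2, ((x - y : ℤ)).natAbs / 2) := by simp [g, h]
    rw [h1]
    unfold g
    split_ifs with h' <;> simp only [Prod.mk.injEq] at h' ⊢ <;> omega

lemma g_fix {x y : ℕ} (hx : x % 2 = 1) (hy : y % 2 = 1) (h : g (x, y) = (x, y)) :
    x = y ∨ x = 3 * y := by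
  unfold g at h
  split_ifs at h with h' <;> simp only [Prod.mk.injEq] at h h' ⊢ <;> omega

lemma g_ne {x y : ℕ} (hx : x % 2 = 1) (hy : y % 2 = 1)
    (h : (g (x, y)).1 = (g (x, y)).2 ∨ (g (x, y)).1 = 3 * (g (x, y)).2) :
    x = y ∨ x = 3 * y := by
  unfold g at h
  split_ifs at h with h' <;> simp only at h h' ⊢ <;> omega

open Classical in
lemma card_P {M : ℕ} (hM : M % 2 = 1) : ((P M).card : ZMod 2) =
    (if IsSquare M then 1 else 0) + (if ∃ z, M = 3 * z ^ 2 then 1 else 0) := by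
  have h0 : (∑ z ∈ (P M).filter (fun z => ¬ (z.1 = z.2 ∨ z.1 = 3 * z.2)), (1 : ZMod 2)) = 0 := by
    refine sum_involution (fun z _ => g z) ?_ ?_ ?_ ?_
    · intros; decide
    · rintro ⟨x, y⟩ hz _ hg
      simp only [mem_filter, mem_P] at hz
      exact hz.2 (g_fix hz.1.1 hz.1.2.1 hg)
    · rintro ⟨x, y⟩ hz
      simp only [mem_filter, mem_P] at hz ⊢
      refine ⟨⟨(g_odd hz.1.1 hz.1.2.1).1, (g_odd hz.1.1 hz.1.2.1).2, ?_⟩, ?_⟩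
      · rw [g_eq hz.1.1 hz.1.2.1, hz.1.2.2]
      · exact fun h => hz.2 (g_ne hz.1.1 hz.1.2.1 h)
    · rintro ⟨x, y⟩ hz
      simp only [mem_filter, mem_P] at hz
      exact g_invol hz.1.1 hz.1.2.1
  have h1 : (((P M).filter (fun z => z.1 = z.2)).card : ZMod 2) =
      if IsSquare M then 1 else 0 := by
    split_ifs with h
    · obtain ⟨r, rfl⟩ := h
      have : (P (r * r)).filter (fun z => z.1 = z.2) = {(r, r)} := by
        ext ⟨x, y⟩
        simp only [mem_filter, mem_P, mem_singleton, Prod.mk.injEq]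
        have hr : r % 2 = 1 := by
          by_contra h'
          have : r % 2 = 0 := by omega
          simp [Nat.mul_mod, this] at hM
        constructor
        · rintro ⟨⟨_, _, h⟩, rfl⟩
          have : x = r := by nlinarith
          exact ⟨this, this⟩
        · rintro ⟨rfl, rfl⟩
          exact ⟨⟨hr, hr, by ring⟩, rfl⟩
      rw [this]; simp
    · have : (P M).filter (fun z => z.1 = z.2) = ∅ := by
        ext ⟨x, y⟩
        simp only [mem_filter, mem_P, notMem_empty, iff_false]
        rintro ⟨⟨_, _, h'⟩, rfl⟩
        exact h ⟨x, by linarith⟩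
      rw [this]; simp
  have h2 : (((P M).filter (fun z => z.1 = 3 * z.2)).card : ZMod 2) =
      if ∃ z, M = 3 * z ^ 2 then 1 else 0 := by
    split_ifs with h
    · obtain ⟨r, rfl⟩ := h
      have : (P (3 * r ^ 2)).filter (fun z => z.1 = 3 * z.2) = {(3 * r, r)} := by
        ext ⟨x, y⟩
        simp only [mem_filter, mem_P, mem_singleton, Prod.mk.injEq]
        have hr : r % 2 = 1 := by
          by_contra h'
          have : r % 2 = 0 := by omega
          simp [Nat.mul_mod, Nat.pow_mod, this] at hM
        constructor
        · rintro ⟨⟨_, _, h⟩, rfl⟩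
          have : y = r := by nlinarith
          exact ⟨by rw [this], this⟩
        · rintro ⟨rfl, rfl⟩
          exact ⟨⟨by omega, hr, by ring⟩, rfl⟩
      rw [this]; simp
    · have : (P M).filter (fun z => z.1 = 3 * z.2) = ∅ := by
        ext ⟨x, y⟩
        simp only [mem_filter, mem_P, notMem_empty, iff_false]
        rintro ⟨⟨_, _, h'⟩, rfl⟩
        exact h ⟨y, by linarith⟩
      rw [this]; simp
  rw [← h1, ← h2]
  have h3 := card_filter_add_card_filter_not (s := P M) (fun z => z.1 = z.2 ∨ z.1 = 3 * z.2)
  rw [← h3, filter_or, card_union_of_disjoint]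
  · push_cast
    simp only [sum_const, nsmul_eq_mul, mul_one] at h0
    rw [h0, add_zero]
  · rw [disjoint_filter]
    rintro ⟨x, y⟩ hz h h'
    simp only [mem_P] at hz h h'
    omega

/-- Euler's series mod 2. -/
noncomputable def E : (ZMod 2)⟦X⟧ := pentagonalSeries (ZMod 2)

open Classical in
/-- The theta series of triangular numbers mod 2. -/
noncomputable def T : (ZMod 2)⟦X⟧ := .mk fun n => if IsSquare (8 * n + 1) then 1 else 0

open Classical in
lemma coeff_E (n : ℕ) : E.coeff n = if IsSquare (24 * n + 1) then 1 else 0 := by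
  have key : n ∈ Set.range pentagonal ↔ IsSquare (24 * n + 1) := by
    constructor
    · rintro ⟨k, rfl⟩
      refine ⟨(6 * k - 1).natAbs, ?_⟩
      have := two_mul_natCast_pentagonal k
      zify
      rw [abs_mul_abs_self]
      linear_combination 12 * this
    · rintro ⟨z, hz⟩
      have h6 : z % 6 = 1 ∨ z % 6 = 5 := by
        have h1 : (z * z) % 6 = 1 := by omega
        have h2 : z % 6 < 6 := Nat.mod_lt _ (by norm_num)
        rw [Nat.mul_mod] at h1
        interval_cases z % 6 <;> simp_all
      have : ∃ k : ℤ, (z : ℤ) = 6 * k - 1 ∨ (z : ℤ) = 1 - 6 * k := by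
        rcases h6 with h | h
        · exact ⟨-((z / 6 : ℕ) : ℤ), Or.inr (by omega)⟩
        · exact ⟨((z + 1) / 6 : ℕ), Or.inl (by omega)⟩
      obtain ⟨k, hk⟩ := this
      refine ⟨k, ?_⟩
      have h2 := two_mul_natCast_pentagonal k
      have h3 : (24 * n + 1 : ℤ) = z * z := by exact_mod_cast hz
      have h4 : (z * z : ℤ) = (6 * k - 1) ^ 2 := by
        rcases hk with hk | hk <;> rw [hk] <;> ring
      zify
      linarith
  have h := coeff_pentagonalSeries_eq_zero_iff (ZMod 2) (n := n)
  rw [key] at h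
  change (pentagonalSeries (ZMod 2)).coeff n = _
  generalize (pentagonalSeries (ZMod 2)).coeff n = c at *
  split_ifs with hs
  · revert h
    simp only [hs, not_true_eq_false, iff_false]
    revert c; decide
  · exact h.mpr hs

lemma sq_expand (f : (ZMod 2)⟦X⟧) : f ^ 2 = expand 2 (by norm_num) f := by
  have := MvPowerSeries.map_frobenius_expand 2 (by norm_num) (f := f) 
  have h : frobenius (ZMod 2) 2 = RingHom.id _ := ZMod.frobenius_zmod 2
  rw [h] at this
  rw [← this]
  change _ = MvPowerSeries.expand 2 _ f
  simp

lemma pow4_expand (f : (ZMod 2)⟦X⟧) : f ^ 4 = expand 4 (by norm_num) f := by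
  rw [show f ^ 4 = (f ^ 2) ^ 2 by ring, sq_expand, sq_expand, ← expand_mul]

lemma pow8_expand (f : (ZMod 2)⟦X⟧) : f ^ 8 = expand 8 (by norm_num) f := by
  rw [show f ^ 8 = (f ^ 4) ^ 2 by ring, pow4_expand, sq_expand, ← expand_mul]

lemma odd_of_sq {j y : ℕ} (hy : 8 * j + 1 = y * y) : y % 2 = 1 := by
  by_contra h'
  have h' : y % 2 = 0 := by omega
  have := congrArg (· % 2) hy
  simp [Nat.mul_mod, h'] at this <;> omega

lemma odd_of_sq' {j y : ℕ} (hy : 2 * j + 1 = y * y) : y % 2 = 1 := by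
  by_contra h'
  have h' : y % 2 = 0 := by omega
  have := congrArg (· % 2) hy
  simp [Nat.mul_mod, h'] at this <;> omega

lemma sq_of_odd {y : ℕ} (hy : y % 2 = 1) : ∃ t, y * y = 8 * t + 1 := by
  have h1 : (y * y) % 8 = 1 := by
    have h2 : y % 8 < 8 := Nat.mod_lt _ (by norm_num)
    have h3 : (y % 8) % 2 = 1 := by omega
    rw [Nat.mul_mod]
    interval_cases y % 8 <;> simp_all
  exact ⟨y * y / 8, by omega⟩

open Classical in
lemma E_mul_T : E * T = E ^ 4 := by
  rw [pow4_expand]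
  ext n
  rw [coeff_mul, coeff_expand]
  simp only [coeff_E, T, coeff_mk, ← ite_and, mul_ite, mul_one, mul_zero]
  rw [sum_boole]
  have hc : #{x ∈ antidiagonal n | IsSquare (8 * x.2 + 1) ∧ IsSquare (24 * x.1 + 1)} =
      #(P (6 * n + 1)) := by
    refine card_bij (fun x _ => (Nat.sqrt (24 * x.1 + 1), Nat.sqrt (8 * x.2 + 1))) ?_ ?_ ?_
    · rintro ⟨i, j⟩ hx
      simp only [mem_filter, HasAntidiagonal.mem_antidiagonal, mem_P] at hx ⊢
      obtain ⟨h, ⟨y, hy⟩, ⟨x, hx⟩⟩ := hx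
      rw [hx, hy, Nat.sqrt_eq, Nat.sqrt_eq]
      exact ⟨odd_of_sq (j := 3 * i) (by omega), odd_of_sq hy, by nlinarith⟩
    · rintro ⟨i, j⟩ hx ⟨i', j'⟩ hx' h
      simp only [mem_filter, HasAntidiagonal.mem_antidiagonal] at hx hx'
      obtain ⟨-, ⟨y, hy⟩, ⟨x, hx⟩⟩ := hx
      obtain ⟨-, ⟨y', hy'⟩, ⟨x', hx'⟩⟩ := hx'
      simp only [hx, hy, hx', hy', Nat.sqrt_eq, Prod.mk.injEq] at h
      obtain ⟨rfl, rfl⟩ := h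
      simp only [Prod.mk.injEq]
      omega
    · rintro ⟨x, y⟩ hz
      simp only [mem_P] at hz
      obtain ⟨s, hs⟩ := sq_of_odd hz.1
      obtain ⟨t, ht⟩ := sq_of_odd hz.2.1
      have h := hz.2.2
      rw [pow_two, pow_two, hs, ht] at h
      have h1 : 24 * (n - t) + 1 = x * x := by omega
      refine ⟨(n - t, t), ?_, ?_⟩
      · simp only [mem_filter, HasAntidiagonal.mem_antidiagonal]
        exact ⟨by omega, ⟨y, ht.symm⟩, ⟨x, h1⟩⟩
      · simp only [h1, ← ht, Nat.sqrt_eq]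
  rw [hc, card_P (by omega), if_neg (c := ∃ z, 6 * n + 1 = 3 * z ^ 2), add_zero]
  · refine if_congr ?_ rfl rfl
    constructor
    · rintro ⟨z, hz⟩
      obtain ⟨t, ht⟩ := sq_of_odd (y := z) (odd_of_sq' (j := 3 * n) (by omega))
      exact ⟨by omega, ⟨z, by omega⟩⟩
    · rintro ⟨h4, ⟨z, hz⟩⟩
      exact ⟨z, by omega⟩
  · rintro ⟨z, hz⟩
    omega

open Classical in
lemma T_mul_T3 : T * expand 3 (by norm_num) T = T ^ 4 + X * (expand 3 (by norm_num) T) ^ 4 := by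
  rw [pow4_expand, pow4_expand, ← expand_mul]
  ext n
  rw [coeff_mul, map_add]
  simp only [coeff_expand, T, coeff_mk, ← ite_and, mul_ite, mul_one, mul_zero]
  rw [sum_boole]
  have hc : #{x ∈ antidiagonal n | (3 ∣ x.2 ∧ IsSquare (8 * (x.2 / 3) + 1)) ∧
      IsSquare (8 * x.1 + 1)} = #(P (2 * n + 1)) := by
    refine card_bij (fun x _ => (Nat.sqrt (8 * x.1 + 1), Nat.sqrt (8 * (x.2 / 3) + 1))) ?_ ?_ ?_
    · rintro ⟨i, j⟩ hx
      simp only [mem_filter, HasAntidiagonal.mem_antidiagonal, mem_P] at hx ⊢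
      obtain ⟨h, ⟨hj, ⟨y, hy⟩⟩, ⟨x, hx⟩⟩ := hx
      rw [hx, hy, Nat.sqrt_eq, Nat.sqrt_eq]
      refine ⟨odd_of_sq hx, odd_of_sq hy, ?_⟩
      rw [pow_two, pow_two, ← hx, ← hy]
      omega
    · rintro ⟨i, j⟩ hx ⟨i', j'⟩ hx' h
      simp only [mem_filter, HasAntidiagonal.mem_antidiagonal] at hx hx'
      obtain ⟨-, ⟨hj, ⟨y, hy⟩⟩, ⟨x, hx⟩⟩ := hx
      obtain ⟨-, ⟨hj', ⟨y', hy'⟩⟩, ⟨x', hx'⟩⟩ := hx'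
      simp only [hx, hy, hx', hy', Nat.sqrt_eq, Prod.mk.injEq] at h
      obtain ⟨rfl, rfl⟩ := h
      simp only [Prod.mk.injEq]
      omega
    · rintro ⟨x, y⟩ hz
      simp only [mem_P] at hz
      obtain ⟨s, hs⟩ := sq_of_odd hz.1
      obtain ⟨t, ht⟩ := sq_of_odd hz.2.1
      have h := hz.2.2
      rw [pow_two, pow_two, hs, ht] at h
      have h3 : 3 * t / 3 = t := by omega
      refine ⟨(s, 3 * t), ?_, ?_⟩
      · simp only [mem_filter, HasAntidiagonal.mem_antidiagonal, h3]
        exact ⟨by omega, ⟨⟨t, rfl⟩, ⟨y, ht.symm⟩⟩, ⟨x, hs.symm⟩⟩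
      · simp only [h3, ← hs, ← ht, Nat.sqrt_eq]
  rw [hc, card_P (by omega)]
  congr 1
  · refine if_congr ?_ rfl rfl
    constructor
    · rintro ⟨z, hz⟩
      obtain ⟨t, ht⟩ := sq_of_odd (y := z) (odd_of_sq' (j := n) (by omega))
      exact ⟨by omega, ⟨z, by omega⟩⟩
    · rintro ⟨h4, ⟨z, hz⟩⟩
      exact ⟨z, by omega⟩
  · rcases n with _ | n
    · rw [coeff_zero_X_mul, if_neg]
      rintro ⟨z, hz⟩
      omega
    · rw [coeff_succ_X_mul]
      simp only [coeff_expand, coeff_mk, ← ite_and]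
      refine if_congr ?_ rfl rfl
      constructor
      · rintro ⟨z, hz⟩
        rw [pow_two] at hz
        obtain ⟨t, ht⟩ := sq_of_odd (y := z) (by
          by_contra h'
          have h' : z % 2 = 0 := by omega
          have := congrArg (· % 2) hz
          simp [Nat.mul_mod, h'] at this <;> omega)
        exact ⟨by omega, ⟨z, by omega⟩⟩
      · rintro ⟨h4, ⟨z, hz⟩⟩
        refine ⟨z, ?_⟩
        rw [pow_two]
        omega

end S9
namespace S9
open PowerSeries Finset

lemma E_ne : E ≠ 0 := by
  intro h
  have := coeff_E 0
  rw [h] at this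
  simp at this

/-- `E(q^3)`. -/
noncomputable def F : (ZMod 2)⟦X⟧ := expand 3 (by norm_num) E

lemma constF : constantCoeff F = 1 := by
  rw [F, constantCoeff_expand, ← coeff_zero_eq_constantCoeff_apply, coeff_E]
  simp

lemma F_ne : F ≠ 0 := by
  intro h
  have := constF
  rw [h] at this
  simp at this

lemma T_eq : T = E ^ 3 := by
  have h := E_mul_T
  apply mul_left_cancel₀ E_ne
  rw [h]; ring

lemma T3_eq : expand 3 (by norm_num) T = F ^ 3 := by
  rw [T_eq, map_pow, F]

lemma modular : E ^ 3 * F ^ 3 = E ^ 12 + X * F ^ 12 := by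
  have h := T_mul_T3
  rw [T3_eq, T_eq] at h
  rw [h]; ring

lemma two_ps : (2 : (ZMod 2)⟦X⟧) = 0 := by
  calc (2 : (ZMod 2)⟦X⟧) = C (2 : ZMod 2) := (map_ofNat C 2).symm
    _ = C 0 := by rw [show (2 : ZMod 2) = 0 by decide]
    _ = 0 := map_zero C

lemma K_eq {a : (ZMod 2)⟦X⟧} (ha : a * F ^ 3 = E ^ 3) :
    a ^ 3 * d⁄dX (ZMod 2) a = (E ^ 9 * F⁻¹ ^ 3) ^ 8 + X ^ 2 * (E ^ 6) ^ 8 +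
      X ^ 4 * (E ^ 3 * F ^ 3) ^ 8 + X ^ 6 * (F ^ 6) ^ 8 + X ^ 1 * (a * F ^ 6) ^ 2 := by
  have h2 := two_ps
  have hm := modular
  have h1 : a * F ^ 6 = E ^ 12 + X * F ^ 12 := by
    rw [← hm, ← ha]; ring
  have hd : d⁄dX (ZMod 2) a = F ^ 6 := by
    have h := congrArg (d⁄dX (ZMod 2)) h1
    simp only [Derivation.leibniz, map_add, derivative_pow, derivative_X, smul_eq_mul] at h
    apply mul_left_cancel₀ (pow_ne_zero 6 F_ne)
    push_cast at h
    linear_combination h - (3 * a * F ^ 5 * d⁄dX (ZMod 2) F - 6 * E ^ 11 * d⁄dX (ZMod 2) E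
      - 6 * X * F ^ 11 * d⁄dX (ZMod 2) F) * h2
  have hw : F * F⁻¹ = 1 := PowerSeries.mul_inv_cancel F (by rw [constF]; decide)
  have h3 : a ^ 2 * F ^ 12 = E ^ 24 + X ^ 2 * F ^ 24 := by
    linear_combination (a * F ^ 6 + E ^ 12 + X * F ^ 12) * h1 + E ^ 12 * X * F ^ 12 * h2
  have h4 : E ^ 6 * F ^ 6 = E ^ 24 + X ^ 2 * F ^ 24 := by
    linear_combination (E ^ 3 * F ^ 3 + E ^ 12 + X * F ^ 12) * hm + E ^ 12 * X * F ^ 12 * h2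
  have h5 : E ^ 12 * F ^ 12 = E ^ 48 + X ^ 4 * F ^ 48 := by
    linear_combination (E ^ 6 * F ^ 6 + E ^ 24 + X ^ 2 * F ^ 24) * h4 +
      E ^ 24 * X ^ 2 * F ^ 24 * h2
  have h6 : a ^ 2 * E ^ 12 * F ^ 24 = (E ^ 24 + X ^ 2 * F ^ 24) * (E ^ 48 + X ^ 4 * F ^ 48) := by
    rw [← h3, ← h5]; ring
  rw [hd]
  apply mul_left_cancel₀ (pow_ne_zero 24 F_ne)
  have hw24 : F ^ 24 * F⁻¹ ^ 24 = 1 := by rw [← mul_pow, hw, one_pow]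
  linear_combination h6 + F ^ 24 * a ^ 2 * h1 - E ^ 72 * hw24

lemma coeff_X_pow8 (s n r : ℕ) (f : (ZMod 2)⟦X⟧) (hs : s < 8) (hr : r < 8) :
    coeff (8 * n + r) (X ^ s * f ^ 8) = if s = r then coeff n f else 0 := by
  rw [coeff_X_pow_mul', pow8_expand, coeff_expand]
  by_cases h : s = r
  · subst h
    have : 8 * n + s - s = 8 * n := by omega
    rw [if_pos (by omega), this, if_pos (by omega), Nat.mul_div_cancel_left _ (by norm_num),
      if_pos rfl]
  · rw [if_neg h]
    by_cases h' : s ≤ 8 * n + r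
    · rw [if_pos h', if_neg (by omega)]
    · rw [if_neg h']

lemma coeff_X_sq (n : ℕ) (f : (ZMod 2)⟦X⟧) :
    coeff (2 * n) (X ^ 1 * f ^ 2) = 0 := by
  rw [coeff_X_pow_mul', sq_expand, coeff_expand]
  by_cases h : 1 ≤ 2 * n
  · rw [if_pos h, if_neg (by omega)]
  · rw [if_neg h]

lemma K_coeff {a : (ZMod 2)⟦X⟧} (ha : a * F ^ 3 = E ^ 3) (j : ℕ) (hj : ¬ IsSquare (8 * j + 1)) :
    coeff (16 * j + 2) (a ^ 3 * d⁄dX (ZMod 2) a) = 0 ∧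
    coeff (48 * j + 6) (a ^ 3 * d⁄dX (ZMod 2) a) = 0 := by
  have hT : coeff j T = 0 := by simp [T, hj]
  have h0 : (E ^ 9 * F⁻¹ ^ 3) ^ 8 = X ^ 0 * (E ^ 9 * F⁻¹ ^ 3) ^ 8 := by simp
  constructor
  · rw [K_eq ha, h0, show 16 * j + 2 = 8 * (2 * j) + 2 by ring]
    simp only [map_add]
    simp only [coeff_X_pow8 _ _ _ _ (show 0 < 8 by norm_num) (show 2 < 8 by norm_num),
      coeff_X_pow8 _ _ _ _ (show 2 < 8 by norm_num) (show 2 < 8 by norm_num),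
      coeff_X_pow8 _ _ _ _ (show 4 < 8 by norm_num) (show 2 < 8 by norm_num),
      coeff_X_pow8 _ _ _ _ (show 6 < 8 by norm_num) (show 2 < 8 by norm_num)]
    rw [show 8 * (2 * j) + 2 = 2 * (8 * j + 1) by ring, coeff_X_sq,
      show E ^ 6 = (E ^ 3) ^ 2 by ring, ← T_eq, sq_expand T, coeff_expand_mul, hT]
    simp
  · rw [K_eq ha, h0, show 48 * j + 6 = 8 * (6 * j) + 6 by ring]
    simp only [map_add]
    simp only [coeff_X_pow8 _ _ _ _ (show 0 < 8 by norm_num) (show 6 < 8 by norm_num),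
      coeff_X_pow8 _ _ _ _ (show 2 < 8 by norm_num) (show 6 < 8 by norm_num),
      coeff_X_pow8 _ _ _ _ (show 4 < 8 by norm_num) (show 6 < 8 by norm_num),
      coeff_X_pow8 _ _ _ _ (show 6 < 8 by norm_num) (show 6 < 8 by norm_num)]
    rw [show 8 * (6 * j) + 6 = 2 * (24 * j + 3) by ring, coeff_X_sq,
      show F ^ 6 = (F ^ 3) ^ 2 by ring, sq_expand (F ^ 3), ← T3_eq,
      show 6 * j = 2 * (3 * j) by ring, coeff_expand_mul, coeff_expand_mul, hT]
    simp

end S9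
namespace S9
open PowerSeries Finset PowerSeries.WithPiTopology

/-- The condition on parts. -/
def pp (i : ℕ) : Prop := ¬ 3 ∣ i ∧ ¬ 4 ∣ i

instance : DecidablePred pp := fun i => by unfold pp; infer_instance

/-- number of restricted partitions -/
def ac (n : ℕ) : ℕ := #(Nat.Partition.restricted n pp)

lemma continuous_expand (k : ℕ) (hk : k ≠ 0) :
    Continuous (expand k hk : (ZMod 2)⟦X⟧ →ₐ[ZMod 2] (ZMod 2)⟦X⟧) := by
  rw [continuous_iff_continuousAt]
  intro x
  rw [ContinuousAt, tendsto_iff_coeff_tendsto]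
  intro d
  simp only [coeff_expand]
  split_ifs with h
  · exact (WithPiTopology.continuous_coeff (ZMod 2) (d / k)).continuousAt
  · exact tendsto_const_nhds

lemma hasProd_f (k : ℕ) (hk : k ≠ 0) :
    HasProd (fun i : ℕ => if k ∣ i + 1 then (1 : (ZMod 2)⟦X⟧) - X ^ (i + 1) else 1)
      (expand k hk (pentagonalSeries (ZMod 2))) := by
  have h := (hasProd_one_sub_X_pow (ZMod 2)).map (expand k hk) (continuous_expand k hk)
  have hinj : Function.Injective (fun i : ℕ => k * (i + 1) - 1) := by
    intro i j hij
    have hk' : 0 < k := Nat.pos_of_ne_zero hk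
    have h1 : 0 < k * (i + 1) := by positivity
    have h2 : 0 < k * (j + 1) := by positivity
    have h3 : k * (i + 1) = k * (j + 1) := by simp only at hij; omega
    have := Nat.eq_of_mul_eq_mul_left hk' h3
    omega
  rw [← hinj.hasProd_iff]
  · convert h using 1
    funext i
    have h1 : 0 < k * (i + 1) := by positivity
    have h2 : k * (i + 1) - 1 + 1 = k * (i + 1) := by omega
    simp only [Function.comp_apply, h2, dvd_mul_right, if_true, map_sub, map_one, map_pow,
      expand_X, pow_mul]
  · intro x hx
    rw [if_neg]
    rintro ⟨c, hc⟩
    apply hx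
    rcases c with _ | c
    · omega
    · exact ⟨c, by simp only; omega⟩

lemma A_prod : (PowerSeries.mk fun n => (ac n : ZMod 2)) * E * F ^ 4 = F * E ^ 4 := by
  have hA := Nat.Partition.hasProd_powerSeriesMk_card_restricted (ZMod 2) pp
  have h1 := hasProd_one_sub_X_pow (ZMod 2)
  have h3 := hasProd_f 3 (by norm_num)
  have h4 := hasProd_f 4 (by norm_num)
  have h12 := hasProd_f (4 * 3) (by norm_num)
  have hl := (hA.mul h1).mul h12
  have hr := h3.mul h4
  have e4 : E ^ 4 = expand 4 (by norm_num) (pentagonalSeries (ZMod 2)) := by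
    rw [pow4_expand, E]
  have e12 : F ^ 4 = expand (4 * 3) (by norm_num) (pentagonalSeries (ZMod 2)) := by
    rw [pow4_expand, F, E, expand_mul]
  have hF : F = expand 3 (by norm_num) (pentagonalSeries (ZMod 2)) := rfl
  rw [e12, e4, hF]
  refine HasProd.unique hl (Eq.mpr (congrArg (fun f => HasProd f _) (funext fun i => ?_)) hr)
  have hs : (∑' j : ℕ, (X : (ZMod 2)⟦X⟧) ^ ((i + 1) * j)) * (1 - X ^ (i + 1)) = 1 := by
    simp_rw [pow_mul]
    exact tsum_pow_mul_one_sub_of_constantCoeff_eq_zero (by simp)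
  have hd : 4 * 3 ∣ i + 1 ↔ 3 ∣ i + 1 ∧ 4 ∣ i + 1 := by omega
  simp only [pp, hd]
  by_cases a : 3 ∣ i + 1 <;> by_cases b : 4 ∣ i + 1 <;> simp [a, b, hs]

lemma A_eq : (PowerSeries.mk fun n => (ac n : ZMod 2)) * F ^ 3 = E ^ 3 := by
  have h := A_prod
  apply mul_left_cancel₀ (mul_ne_zero E_ne F_ne)
  linear_combination h

/-- single color -/
abbrev Sg (j : ℕ) := {U : Multiset ℕ // (∀ x ∈ U, ¬ 3 ∣ x ∧ ¬ 4 ∣ x) ∧ U.sum = j}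

/-- multicolor -/
abbrev Cl (k n : ℕ) := {M : Multiset (ℕ × ℕ) //
    (∀ x ∈ M, ¬ 3 ∣ x.1 ∧ ¬ 4 ∣ x.1 ∧ x.2 < k) ∧ (M.map Prod.fst).sum = n}

/-- single color partitions -/
def sgEquiv (j : ℕ) : Sg j ≃ {x // x ∈ Nat.Partition.restricted j pp} where
  toFun U := ⟨⟨U.1, fun {i} hi => by
    have := (U.2.1 i hi).1
    rcases i with _ | i
    · simp at this
    · omega, U.2.2⟩, by
      simp only [Nat.Partition.restricted, mem_filter, mem_univ, true_and]
      exact U.2.1⟩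
  invFun x := ⟨x.1.parts, by
    have := x.2
    simp only [Nat.Partition.restricted, mem_filter, mem_univ, true_and] at this
    exact this, x.1.parts_sum⟩
  left_inv _ := rfl
  right_inv _ := rfl

instance (j : ℕ) : Finite (Sg j) := Finite.of_equiv _ (sgEquiv j).symm

lemma card_Sg (j : ℕ) : Nat.card (Sg j) = ac j := by
  rw [Nat.card_congr (sgEquiv j), Nat.card_eq_fintype_card, Fintype.card_coe, ac]

/-- peeling off one color -/
def peel (k n : ℕ) : Cl (k + 1) n ≃ Σ ij : {x // x ∈ antidiagonal n},
    {q : Multiset (ℕ × ℕ) × Multiset ℕ //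
      ((∀ x ∈ q.1, ¬ 3 ∣ x.1 ∧ ¬ 4 ∣ x.1 ∧ x.2 < k) ∧ (q.1.map Prod.fst).sum = ij.1.1) ∧
      ((∀ x ∈ q.2, ¬ 3 ∣ x ∧ ¬ 4 ∣ x) ∧ q.2.sum = ij.1.2)} where
  toFun M := ⟨⟨(((M.1.filter (fun x => x.2 < k)).map Prod.fst).sum,
      ((M.1.filter (fun x => ¬ x.2 < k)).map Prod.fst).sum), by
        rw [HasAntidiagonal.mem_antidiagonal]
        simp only
        rw [← Multiset.sum_add, ← Multiset.map_add, Multiset.filter_add_not, M.2.2]⟩,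
      ⟨(M.1.filter (fun x => x.2 < k), (M.1.filter (fun x => ¬ x.2 < k)).map Prod.fst), by
        refine ⟨⟨?_, rfl⟩, ?_, rfl⟩
        · intro x hx
          rw [Multiset.mem_filter] at hx
          have := M.2.1 x hx.1
          exact ⟨this.1, this.2.1, hx.2⟩
        · intro x hx
          rw [Multiset.mem_map] at hx
          obtain ⟨y, hy, rfl⟩ := hx
          rw [Multiset.mem_filter] at hy
          have := M.2.1 y hy.1
          exact ⟨this.1, this.2.1⟩⟩⟩
  invFun q := ⟨q.2.1.1 + q.2.1.2.map (fun x => (x, k)), by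
    obtain ⟨⟨⟨i, j⟩, hij⟩, ⟨⟨S, U⟩, ⟨hS, hS'⟩, ⟨hU, hU'⟩⟩⟩ := q
    rw [HasAntidiagonal.mem_antidiagonal] at hij
    simp only at *
    constructor
    · intro x hx
      rw [Multiset.mem_add, Multiset.mem_map] at hx
      rcases hx with hx | ⟨y, hy, rfl⟩
      · have := hS x hx
        exact ⟨this.1, this.2.1, by omega⟩
      · have := hU y hy
        exact ⟨this.1, this.2, by simp⟩
    · rw [Multiset.map_add, Multiset.sum_add, Multiset.map_map, hS']
      simp [hU', hij]⟩
  left_inv M := by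
    apply Subtype.ext
    simp only [Multiset.map_map]
    conv_rhs => rw [← Multiset.filter_add_not (fun x => x.2 < k) M.1]
    congr 1
    conv_rhs => rw [← Multiset.map_id (Multiset.filter (fun x => ¬ x.2 < k) M.1)]
    apply Multiset.map_congr rfl
    intro x hx
    rw [Multiset.mem_filter] at hx
    have := (M.2.1 x hx.1).2.2
    ext
    · rfl
    · simp only [Function.comp_apply, id]
      omega
  right_inv q := by
    obtain ⟨⟨⟨i, j⟩, hij⟩, ⟨⟨S, U⟩, ⟨hS, hS'⟩, ⟨hU, hU'⟩⟩⟩ := q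
    simp only at hS hS' hU hU'
    have e1 : Multiset.filter (fun x : ℕ × ℕ => x.2 < k) (S + U.map (fun x => (x, k))) = S := by
      rw [Multiset.filter_add, Multiset.filter_eq_self.2 (fun x hx => (hS x hx).2.2),
        Multiset.filter_eq_nil.2, add_zero]
      intro x hx
      rw [Multiset.mem_map] at hx
      obtain ⟨y, _, rfl⟩ := hx
      simp
    have e2 : Multiset.map Prod.fst
        (Multiset.filter (fun x : ℕ × ℕ => ¬ x.2 < k) (S + U.map (fun x => (x, k)))) = U := by
      rw [Multiset.filter_add, Multiset.filter_eq_nil.2, zero_add, Multiset.filter_eq_self.2,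
        Multiset.map_map]
      · simp
      · intro x hx
        rw [Multiset.mem_map] at hx
        obtain ⟨y, _, rfl⟩ := hx
        simp
      · intro x hx
        simpa using (hS x hx).2.2
    apply Sigma.subtype_ext
    · apply Subtype.ext
      simp only [e1, e2, hS', hU']
    · simp only [e1, e2]

/-- fibres of the peeling map -/
def fib (k i j : ℕ) : {q : Multiset (ℕ × ℕ) × Multiset ℕ //
      ((∀ x ∈ q.1, ¬ 3 ∣ x.1 ∧ ¬ 4 ∣ x.1 ∧ x.2 < k) ∧ (q.1.map Prod.fst).sum = i) ∧
      ((∀ x ∈ q.2, ¬ 3 ∣ x ∧ ¬ 4 ∣ x) ∧ q.2.sum = j)} ≃ Cl k i × Sg j where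
  toFun q := (⟨q.1.1, q.2.1⟩, ⟨q.1.2, q.2.2⟩)
  invFun r := ⟨(r.1.1, r.2.1), r.1.2, r.2.2⟩
  left_inv _ := rfl
  right_inv _ := rfl

lemma card_Cl (k : ℕ) : ∀ n, Finite (Cl k n) ∧ (Nat.card (Cl k n) : ℤ) =
    coeff n ((PowerSeries.mk fun n => (ac n : ℤ)) ^ k) := by
  induction k with
  | zero =>
    intro n
    have hz : ∀ M : Cl 0 n, M.1 = 0 := fun M => by
      rw [Multiset.eq_zero_iff_forall_notMem]
      intro x hx
      exact absurd (M.2.1 x hx).2.2 (by simp)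
    have hsub : Subsingleton (Cl 0 n) := ⟨fun a b => Subtype.ext (by rw [hz a, hz b])⟩
    refine ⟨inferInstance, ?_⟩
    rw [pow_zero, coeff_one]
    split_ifs with h
    · subst h
      have : Nonempty (Cl 0 0) := ⟨⟨0, by simp⟩⟩
      simp
    · have : IsEmpty (Cl 0 n) := ⟨fun M => h (by
        have := M.2.2
        rw [hz M] at this
        simpa using this.symm)⟩
      simp
  | succ k ih =>
    intro n
    have hf : ∀ i j, Finite {q : Multiset (ℕ × ℕ) × Multiset ℕ //
      ((∀ x ∈ q.1, ¬ 3 ∣ x.1 ∧ ¬ 4 ∣ x.1 ∧ x.2 < k) ∧ (q.1.map Prod.fst).sum = i) ∧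
      ((∀ x ∈ q.2, ¬ 3 ∣ x ∧ ¬ 4 ∣ x) ∧ q.2.sum = j)} := fun i j => by
      have := (ih i).1
      exact Finite.of_equiv _ (fib k i j).symm
    refine ⟨Finite.of_equiv _ (peel k n).symm, ?_⟩
    rw [Nat.card_congr (peel k n), Nat.card_sigma, pow_succ, coeff_mul]
    simp only [coeff_mk, Nat.card_congr (fib k _ _), Nat.card_prod, card_Sg]
    push_cast
    simp only [(ih _).2]
    exact Finset.sum_coe_sort (antidiagonal n) (fun x : ℕ × ℕ =>
      coeff x.1 ((PowerSeries.mk fun n => (ac n : ℤ)) ^ k) * (ac x.2 : ℤ))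

lemma final (r : ℕ) (hr : r % 2 = 0) (h : coeff r ((PowerSeries.mk fun n => (ac n : ZMod 2)) ^ 3 *
    d⁄dX (ZMod 2) (PowerSeries.mk fun n => (ac n : ZMod 2))) = 0) :
    coloredRegular 4 3 4 (r + 1) ≡ 0 [MOD 8] := by
  set A : ℤ⟦X⟧ := PowerSeries.mk fun n => (ac n : ℤ) with hA
  have hmap : PowerSeries.map (Int.castRingHom (ZMod 2)) A =
      PowerSeries.mk fun n => (ac n : ZMod 2) := by
    ext n; simp [hA]
  have hmapd : PowerSeries.map (Int.castRingHom (ZMod 2)) (d⁄dX ℤ A) =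
      d⁄dX (ZMod 2) (PowerSeries.mk fun n => (ac n : ZMod 2)) := by
    ext n; simp [hA, coeff_derivative]
  rw [← hmapd, ← hmap, ← map_pow, ← map_mul, coeff_map] at h
  have h2 : (2 : ℤ) ∣ coeff r (A ^ 3 * d⁄dX ℤ A) := by
    exact (ZMod.intCast_zmod_eq_zero_iff_dvd _ 2).1 h
  have hd : d⁄dX ℤ (A ^ 4) = 4 * (A ^ 3 * d⁄dX ℤ A) := by
    rw [derivative_pow]; push_cast; ring
  have hc := congrArg (coeff r) hd
  rw [coeff_derivative, ← (card_Cl 4 (r + 1)).2, show (4 : ℤ⟦X⟧) = C 4 by simp, coeff_C_mul] at hc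
  change (coloredRegular 4 3 4 (r + 1) : ℤ) * _ = _ at hc
  obtain ⟨c, hc2⟩ := h2
  rw [hc2] at hc
  have h8 : (8 : ℤ) ∣ (coloredRegular 4 3 4 (r + 1) : ℤ) * (r + 1) := ⟨c, by rw [hc]; ring⟩
  have h8' : 8 ∣ coloredRegular 4 3 4 (r + 1) * (r + 1) := by exact_mod_cast h8
  rw [Nat.modEq_zero_iff_dvd]
  refine Nat.Coprime.dvd_of_dvd_mul_right ?_ h8'
  have : Nat.Coprime (2 ^ 3) (r + 1) :=
    Nat.Coprime.pow_left 3 ((Nat.coprime_two_left).2 (Nat.odd_iff.2 (by omega)))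
  exact this

end S9

lemma S9.not_sq {p : ℕ} (hp : p.Prime) (hp5 : 5 ≤ p) {k m j : ℕ} (hm : ¬ p ∣ m)
    (hj : 8 * j + 1 = p ^ (2 * k + 1) * (8 * m + p)) : ¬ IsSquare (8 * j + 1) := by
  rintro ⟨z, hz⟩
  have hz0 : z ≠ 0 := by rintro rfl; omega
  have hnd : ¬ p ∣ 8 * m + p := by
    intro h
    have h1 : p ∣ 2 ^ 3 * m := by
      have := (Nat.dvd_add_left (dvd_refl p)).1 h
      simpa using this
    rcases hp.dvd_mul.1 h1 with h2 | h2
    · have := Nat.le_of_dvd (by norm_num) (hp.dvd_of_dvd_pow h2)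
      omega
    · exact hm h2
  have h1 : (8 * j + 1).factorization p = 2 * k + 1 := by
    rw [hj, Nat.factorization_mul (pow_ne_zero _ hp.ne_zero) (by omega),
      Finsupp.add_apply, hp.factorization_pow, Finsupp.single_eq_same,
      Nat.factorization_eq_zero_of_not_dvd hnd]
  rw [hz, Nat.factorization_mul hz0 hz0, Finsupp.add_apply] at h1
  omega

theorem stmt_9 (p : ℕ) (hp : p.Prime) (hp5 : 5 ≤ p)
    (hleg : @legendreSym p ⟨hp⟩ (-2) = -1) (k m : ℕ) (hm : ¬ p ∣ m) :
    coloredRegular 4 3 4 (16 * p ^ (2 * k + 1) * m + 2 * p ^ (2 * k + 2) + 1) ≡ 0 [MOD 8] ∧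
    coloredRegular 4 3 4 (48 * p ^ (2 * k + 1) * m + 6 * p ^ (2 * k + 2) + 1) ≡ 0 [MOD 8] := by
  have hodd : p ^ (k + 1) % 2 = 1 := by
    have : p % 2 = 1 := hp.eq_two_or_odd.resolve_left (by omega)
    rw [Nat.pow_mod, this]; simp
  obtain ⟨t, ht⟩ := S9.sq_of_odd hodd
  have ht' : p ^ (2 * k + 2) = 8 * t + 1 := by rw [← ht]; ring
  set j := p ^ (2 * k + 1) * m + t with hjdef
  have hj : 8 * j + 1 = p ^ (2 * k + 1) * (8 * m + p) := by
    have : p ^ (2 * k + 1) * (8 * m + p) = 8 * (p ^ (2 * k + 1) * m) + p ^ (2 * k + 2) := by ring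
    rw [this, ht', hjdef]; ring
  have hns := S9.not_sq hp hp5 hm hj
  have hK := S9.K_coeff S9.A_eq j hns
  constructor
  · rw [show 16 * p ^ (2 * k + 1) * m + 2 * p ^ (2 * k + 2) = 16 * j + 2 by
      rw [ht', hjdef]; ring]
    exact S9.final _ (by omega) hK.1
  · rw [show 48 * p ^ (2 * k + 1) * m + 6 * p ^ (2 * k + 2) = 48 * j + 6 by
      rw [ht', hjdef]; ring]
    exact S9.final _ (by omega) hK.2
end
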